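/- arXiv:math/0701117 — 8 statements merged into one kernel-verified Lean document; each statement's English description precedes it below -/
import Mathlib

section
/- Let (G⃗,c) be a finite weighted symmetric digraph and let r be a real number with r ≥ L(G⃗,c). Then (G⃗,c) has a circular r-coloring if and only if (G⃗,c) has a breaker function T such that every dicycle C of G⃗ satisfying 0 < |C|_c (mod r) < L(G⃗,c) satisfies |C|_c / |C|_T ≤ r. -/
/-!
Write `w u v = c u v - r * T u v`.

From a colouring `φ`, put `T u v = 1` when `φ v < φ u` and `T u v = 0` otherwise. Every arc then
satisfies `c u v ≤ φ v - φ u + r * T u v`, and summing around a dicycle gives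
`cycSum c ≤ r * cycSum T`.

Conversely, given a breaker `T`, consider rooted spanning forests of arcs, with the potential `p`
that vanishes at the roots and grows by `w` along forest arcs. There are finitely many forests;
take one with the largest `∑ v, p v`. If an arc `u v` has `p v < p u + w u v`, then `v` is an
ancestor of `u`: otherwise re-hanging `v` below `u` lifts the whole subtree of `v` and increases
the sum (`IsForest.rehang`). In that case the forest path from `v` to `u` closed up by `u v` is a
dicycle with `cycSum c > r * cycSum T` (`IsForest.exists_dicycle`), so by hypothesis its
`c`-length is, modulo `r`, either `0` or at least `L`. As `c u v + c v u ≤ L`, this alone forces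
`p v - p u` to lie in `[c u v, r - c v u]` modulo `r`. If neither `u v` nor `v u` violates the
potential inequality, the same membership is immediate (`spaced_of_le`). Hence `p` modulo `r` is
a circular `r`-colouring (`isCircColoring_rmod`).
-/

/-- `x (mod r)`: the unique `t ∈ [0, r)` with `t ≡ x (mod r)` (for `r > 0`). -/
noncomputable def rmod (x r : ℝ) : ℝ := x - r * (⌊x / r⌋ : ℝ)

/-- Circular distance on the circle `S^r` identified with `[0, r)`:
`d_r(x,y) = (y - x) (mod r)` if `x ≠ y`, and `0` if `x = y`. -/
noncomputable def circDist (r x y : ℝ) : ℝ := if x = y then 0 else rmod (y - x) r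

/-- `φ : V → [0, r)` is a circular `r`-coloring of the weighted digraph with arc
relation `A` and weights `c` if `d_r(φ u, φ v) ≥ c u v` for every arc `u v`. -/
noncomputable def IsCircColoring {V : Type*} (A : V → V → Prop) (c : V → V → ℝ)
    (r : ℝ) (φ : V → ℝ) : Prop :=
  (∀ v, 0 ≤ φ v ∧ φ v < r) ∧ ∀ u v, A u v → c u v ≤ circDist r (φ u) (φ v)

/-- A breaker function: `T` maps arcs to `{0,1}` with `T x y + T y x = 1` for every arc. -/
def IsBreaker {V : Type*} (A : V → V → Prop) (T : V → V → ℝ) : Prop :=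
  (∀ u v, A u v → T u v = 0 ∨ T u v = 1) ∧ (∀ u v, A u v → T u v + T v u = 1)

/-- A dicycle of length `n`, encoded as an injective map `f : ZMod n → V` (so the
vertices `f 0, …, f (n-1)` are distinct) with each `f i → f (i+1)` an arc. -/
def IsDicycle {V : Type*} (A : V → V → Prop) (n : ℕ) (f : ZMod n → V) : Prop :=
  0 < n ∧ Function.Injective f ∧ ∀ i : ZMod n, A (f i) (f (i + 1))

/-- The sum of an arc-weighting `w` over the arcs of the closed walk `f`. -/
noncomputable def cycSum {V : Type*} (w : V → V → ℝ) (n : ℕ) (f : ZMod n → V) : ℝ :=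
  ∑ i ∈ Finset.range n, w (f (i : ZMod n)) (f ((i : ZMod n) + 1))

/-! ### Arithmetic modulo `r` -/

lemma rmod_nonneg {r : ℝ} (hr : 0 < r) (x : ℝ) : 0 ≤ rmod x r := by
  unfold rmod
  have h := Int.floor_le (x / r)
  rw [le_div_iff₀ hr] at h
  linarith

lemma rmod_lt {r : ℝ} (hr : 0 < r) (x : ℝ) : rmod x r < r := by
  unfold rmod
  have h := Int.lt_floor_add_one (x / r)
  rw [div_lt_iff₀ hr] at h
  linarith

lemma rmod_eq_of_mem {r x t : ℝ} (hr : 0 < r) (m : ℤ) (h : x + r * m = t) (h0 : 0 ≤ t)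
    (h1 : t < r) : rmod x r = t := by
  have : ⌊x / r⌋ = -m := by
    rw [Int.floor_eq_iff, le_div_iff₀ hr, div_lt_iff₀ hr]
    push_cast
    constructor <;> nlinarith
  unfold rmod
  rw [this]
  push_cast
  linarith

/-- The difference `p v - p u` is congruent modulo `r` to a number in `[c u v, r - c v u]`: the
condition that the arcs `u v` and `v u` impose on a colouring, stated for real potentials. -/
def Spaced {V : Type*} (c : V → V → ℝ) (r : ℝ) (p : V → ℝ) (u v : V) : Prop :=
  ∃ m : ℤ, c u v ≤ p v - p u + r * m ∧ p v - p u + r * m ≤ r - c v u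

lemma Spaced.symm {V : Type*} {c : V → V → ℝ} {r : ℝ} {p : V → ℝ} {u v : V}
    (h : Spaced c r p u v) : Spaced c r p v u := by
  obtain ⟨m, h1, h2⟩ := h
  refine ⟨1 - m, ?_, ?_⟩ <;> push_cast <;> linarith

lemma isCircColoring_rmod {V : Type*} {A : V → V → Prop} (hsym : ∀ u v, A u v ↔ A v u)
    {c : V → V → ℝ} (hc : ∀ u v, A u v → 0 < c u v) {r : ℝ} (hr : 0 < r) {p : V → ℝ}
    (h : ∀ u v, A u v → Spaced c r p u v) : IsCircColoring A c r (fun v => rmod (p v) r) := by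
  refine ⟨fun v => ⟨rmod_nonneg hr _, rmod_lt hr _⟩, fun u v huv => ?_⟩
  obtain ⟨m, h1, h2⟩ := h u v huv
  have hu := hc u v huv
  have hv := hc v u ((hsym u v).1 huv)
  have key : rmod (rmod (p v) r - rmod (p u) r) r = p v - p u + r * m := by
    apply rmod_eq_of_mem hr (⌊p v / r⌋ - ⌊p u / r⌋ + m)
    · unfold rmod
      push_cast
      ring
    · linarith
    · linarith
  unfold circDist
  split_ifs with heq
  · -- equal colours would give distance `0`, outside `[c u v, r - c v u]`
    simp only [heq, sub_self] at key
    have : rmod 0 r = 0 := by simp [rmod]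
    linarith
  · simpa only [key] using h1

/-- If neither of the arcs `u v` and `v u` violates the potential inequality, the pair is
spaced. -/
lemma spaced_of_le {V : Type*} {A : V → V → Prop} {c T : V → V → ℝ} {r : ℝ}
    (hT : IsBreaker A T) {p : V → ℝ} {u v : V} (huv : A u v)
    (h1 : p u + (c u v - r * T u v) ≤ p v) (h2 : p v + (c v u - r * T v u) ≤ p u) :
    Spaced c r p u v := by
  have hs := hT.2 u v huv
  have hvu : T v u = 1 - T u v := by linarith
  rw [hvu] at h2
  rcases hT.1 u v huv with h | h <;> rw [h] at h1 h2
  · refine ⟨0, ?_, ?_⟩ <;> push_cast <;> linarith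
  · refine ⟨1, ?_, ?_⟩ <;> push_cast <;> linarith

/-! ### From a colouring to a breaker function -/

lemma exists_breaker_of_coloring {V : Type*} {A : V → V → Prop}
    {c : V → V → ℝ} (hc : ∀ u v, A u v → 0 < c u v) {r : ℝ} (hr : 0 < r) {φ : V → ℝ}
    (hφ : IsCircColoring A c r φ) :
    ∃ T : V → V → ℝ, IsBreaker A T ∧ ∀ (n : ℕ) (f : ZMod n → V), IsDicycle A n f →
      cycSum c n f ≤ r * cycSum T n f := by
  classical
  obtain ⟨hb, hd⟩ := hφ
  have hne : ∀ u v, A u v → φ u ≠ φ v := by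
    intro u v huv heq
    have h := hd u v huv
    rw [circDist, if_pos heq] at h
    linarith [hc u v huv]
  let T : V → V → ℝ := fun u v => if φ v < φ u then 1 else 0
  have harc : ∀ u v, A u v → c u v ≤ φ v - φ u + r * T u v := by
    intro u v huv
    have h := hd u v huv
    rw [circDist, if_neg (hne u v huv)] at h
    obtain ⟨hu0, hu1⟩ := hb u
    obtain ⟨hv0, hv1⟩ := hb v
    by_cases hlt : φ v < φ u
    · rw [rmod_eq_of_mem hr 1 rfl (by push_cast; linarith) (by push_cast; linarith)] at h
      simpa [T, hlt] using h
    · rw [rmod_eq_of_mem hr 0 rfl (by push_cast; linarith) (by push_cast; linarith)] at h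
      simpa [T, hlt] using h
  refine ⟨T, ⟨fun u v _ => ?_, fun u v huv => ?_⟩, fun n f hf => ?_⟩
  · by_cases h : φ v < φ u <;> simp [T, h]
  · rcases lt_or_gt_of_ne (hne u v huv) with h | h <;> simp [T, h, h.le]
  · have htel : ∑ i ∈ Finset.range n, (φ (f ((i : ZMod n) + 1)) - φ (f (i : ZMod n))) = 0 := by
      have := Finset.sum_range_sub (fun i : ℕ => φ (f (i : ZMod n))) n
      simpa using this
    have hle : cycSum c n f ≤ ∑ i ∈ Finset.range n,
        ((φ (f ((i : ZMod n) + 1)) - φ (f (i : ZMod n)))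
          + r * T (f (i : ZMod n)) (f ((i : ZMod n) + 1))) :=
      Finset.sum_le_sum fun i _ => harc _ _ (hf.2.2 i)
    rw [Finset.sum_add_distrib, htel, zero_add, ← Finset.mul_sum] at hle
    exact hle

/-! ### Closing a path to a dicycle -/

/-- The closed walk `g 0, …, g k, g 0` in the `ZMod`-indexed encoding. -/
def closeUp {V : Type*} (k : ℕ) (g : ℕ → V) : ZMod (k + 1) → V := fun i => g i.val

lemma closeUp_natCast {V : Type*} {k : ℕ} (g : ℕ → V) {i : ℕ} (hi : i ≤ k) :
    closeUp k g (i : ZMod (k + 1)) = g i := by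
  unfold closeUp
  rw [ZMod.val_natCast_of_lt (Nat.lt_succ_of_le hi)]

lemma closeUp_succ {V : Type*} {k : ℕ} (g : ℕ → V) {i : ℕ} (hi : i < k) :
    closeUp k g ((i : ZMod (k + 1)) + 1) = g (i + 1) := by
  have := closeUp_natCast g (show i + 1 ≤ k from hi)
  rwa [Nat.cast_add, Nat.cast_one] at this

lemma closeUp_last {V : Type*} (k : ℕ) (g : ℕ → V) :
    closeUp k g ((k : ZMod (k + 1)) + 1) = g 0 := by
  have h : ((k : ZMod (k + 1)) + 1) = ((0 : ℕ) : ZMod (k + 1)) := by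
    have := ZMod.natCast_self (k + 1)
    rw [Nat.cast_add, Nat.cast_one] at this
    rw [this, Nat.cast_zero]
  rw [h, closeUp_natCast g (Nat.zero_le k)]

lemma cycSum_closeUp {V : Type*} (w : V → V → ℝ) (k : ℕ) (g : ℕ → V) :
    cycSum w (k + 1) (closeUp k g)
      = ∑ i ∈ Finset.range k, w (g i) (g (i + 1)) + w (g k) (g 0) := by
  unfold cycSum
  rw [Finset.sum_range_succ, closeUp_last, closeUp_natCast g le_rfl]
  congr 1
  refine Finset.sum_congr rfl fun i hi => ?_
  have hi := Finset.mem_range.1 hi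
  rw [closeUp_succ g hi, closeUp_natCast g hi.le]

lemma isDicycle_closeUp {V : Type*} {A : V → V → Prop} {k : ℕ} {g : ℕ → V}
    (hinj : ∀ i j, i ≤ k → j ≤ k → g i = g j → i = j)
    (harc : ∀ i < k, A (g i) (g (i + 1))) (hlast : A (g k) (g 0)) :
    IsDicycle A (k + 1) (closeUp k g) := by
  refine ⟨Nat.succ_pos k, fun i j hij => ?_, fun i => ?_⟩
  · exact ZMod.val_injective _ (hinj _ _ (Nat.lt_succ_iff.1 i.val_lt)
      (Nat.lt_succ_iff.1 j.val_lt) hij)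
  · obtain ⟨m, hm, rfl⟩ : ∃ m : ℕ, m ≤ k ∧ (m : ZMod (k + 1)) = i :=
      ⟨i.val, Nat.lt_succ_iff.1 i.val_lt, ZMod.natCast_zmod_val i⟩
    rw [closeUp_natCast g hm]
    rcases hm.lt_or_eq with h | rfl
    · rw [closeUp_succ g h]
      exact harc m h
    · rw [closeUp_last]
      exact hlast

/-! ### Forests and their potentials -/

/-- `par` is the parent map of a rooted spanning forest of arcs (roots are the fixed points of
`par`), `rk` is a rank function witnessing acyclicity, and `p` is the potential that is `0` at
roots and increases by `w` along every forest arc. -/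
structure IsForest {V : Type*} (A : V → V → Prop) (w : V → V → ℝ) (par : V → V)
    (rk : V → ℕ) (p : V → ℝ) : Prop where
  rk_lt : ∀ x, par x ≠ x → rk (par x) < rk x
  arc : ∀ x, par x ≠ x → A (par x) x
  root : ∀ x, par x = x → p x = 0
  step : ∀ x, par x ≠ x → p x = p (par x) + w (par x) x

namespace IsForest

variable {V : Type*} {A : V → V → Prop} {w : V → V → ℝ} {par : V → V} {rk : V → ℕ} {p : V → ℝ}

/-- The parent map alone determines the potential. -/
lemma potential_unique (h : IsForest A w par rk p) {rk' : V → ℕ} {p' : V → ℝ}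
    (h' : IsForest A w par rk' p') : p = p' := by
  have key : ∀ n x, rk x = n → p x = p' x := by
    intro n
    induction n using Nat.strong_induction_on with
    | _ n ih =>
      intro x hx
      by_cases hp : par x = x
      · rw [h.root x hp, h'.root x hp]
      · rw [h.step x hp, h'.step x hp, ih _ (hx ▸ h.rk_lt x hp) _ rfl]
  exact funext fun x => key _ x rfl

/-- If `v` is not an ancestor of `u`, making `u` the parent of `v` gives a forest whose potential
is larger by the same amount on all descendants of `v`, and unchanged elsewhere. -/
lemma rehang (h : IsForest A w par rk p) {u v : V} (huv : A u v)
    (hanc : ¬ ∃ k, par^[k] u = v) :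
    ∃ par' rk' p', IsForest A w par' rk' p' ∧ p' v = p u + w u v ∧
      ∀ x, p' x = p x ∨ p' x = p x + (p u + w u v - p v) := by
  classical
  let D : V → Prop := fun x => ∃ k, par^[k] x = v
  have hDv : D v := ⟨0, rfl⟩
  have hDu : ¬ D u := hanc
  have hne : u ≠ v := fun e => hDu (e ▸ hDv)
  have hD : ∀ x, x ≠ v → (D (par x) ↔ D x) := by
    intro x hx
    constructor
    · rintro ⟨k, hk⟩
      exact ⟨k + 1, by rwa [Function.iterate_succ_apply]⟩
    · rintro ⟨k, hk⟩
      cases k with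
      | zero => exact absurd hk hx
      | succ k => exact ⟨k, by rwa [Function.iterate_succ_apply] at hk⟩
  -- a root other than `v` is not a descendant of `v`
  have hroot : ∀ x, x ≠ v → par x = x → ¬ D x := by
    rintro x hx hp ⟨k, hk⟩
    rw [Function.iterate_fixed hp] at hk
    exact hx hk
  have hpar' : ∀ x, x ≠ v → Function.update par v u x = par x := fun x hx =>
    Function.update_of_ne hx _ _
  have hparv : Function.update par v u v = u := Function.update_self _ _ _
  refine ⟨Function.update par v u, fun x => if D x then rk x + (rk u + 1) else rk x,
    fun x => if D x then p x + (p u + w u v - p v) else p x, ⟨?_, ?_, ?_, ?_⟩, ?_, ?_⟩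
  · intro x hx
    by_cases hxv : x = v
    · subst hxv
      simp only [hparv, hDu, hDv, if_true, if_false]
      omega
    · rw [hpar' x hxv] at hx ⊢
      have := h.rk_lt x hx
      by_cases hd : D x
      · simp only [(hD x hxv).2 hd, hd, if_true]
        omega
      · simpa only [mt (hD x hxv).1 hd, hd, if_false] using this
  · intro x hx
    by_cases hxv : x = v
    · subst hxv
      rwa [hparv]
    · rw [hpar' x hxv] at hx ⊢
      exact h.arc x hx
  · intro x hx
    by_cases hxv : x = v
    · subst hxv
      exact absurd (hparv.symm.trans hx) hne
    · rw [hpar' x hxv] at hx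
      simp only [hroot x hxv hx, if_false]
      exact h.root x hx
  · intro x hx
    by_cases hxv : x = v
    · subst hxv
      simp only [hparv, hDu, hDv, if_true, if_false]
      ring
    · rw [hpar' x hxv] at hx ⊢
      have := h.step x hx
      by_cases hd : D x
      · simp only [(hD x hxv).2 hd, hd, if_true]
        linarith
      · simpa only [mt (hD x hxv).1 hd, hd, if_false] using this
  · simp only [hDv, if_true]
    ring
  · intro x
    by_cases hd : D x
    · exact Or.inr (by simp only [hd, if_true])
    · exact Or.inl (by simp only [hd, if_false])

/-- An arc from `u` to an ancestor `v` of `u` closes the forest path from `v` to `u` to a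
dicycle, whose total `w`-weight is read off from the potential. -/
lemma exists_dicycle (h : IsForest A w par rk p) {u v : V} (huv : A u v)
    (hanc : ∃ k, par^[k] u = v) :
    ∃ (n : ℕ) (f : ZMod n → V), IsDicycle A n f ∧ cycSum w n f = p u - p v + w u v := by
  classical
  -- minimality of the number `k` of steps keeps the path from idling at a root
  obtain ⟨k, hk, hmin⟩ : ∃ k, par^[k] u = v ∧ ∀ j < k, par^[j] u ≠ v :=
    ⟨Nat.find hanc, Nat.find_spec hanc, fun j hj => Nat.find_min hanc hj⟩
  have hnr : ∀ j < k, par (par^[j] u) ≠ par^[j] u := by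
    intro j hj hfix
    refine hmin j hj ?_
    rw [← hk, ← Nat.sub_add_cancel hj.le, Function.iterate_add_apply,
      Function.iterate_fixed hfix]
  let g : ℕ → V := fun i => par^[k - i] u
  have hg0 : g 0 = v := hk
  have hgk : g k = u := by simp [g]
  have hgs : ∀ i < k, g i = par (g (i + 1)) ∧ par (g (i + 1)) ≠ g (i + 1) := by
    intro i hi
    refine ⟨?_, hnr _ (by omega)⟩
    change par^[k - i] u = par (par^[k - (i + 1)] u)
    rw [show k - i = (k - (i + 1)) + 1 by omega, Function.iterate_succ_apply']
  have hrk : ∀ i < k, rk (g i) < rk (g (i + 1)) := by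
    intro i hi
    rw [(hgs i hi).1]
    exact h.rk_lt _ (hgs i hi).2
  have hlt : ∀ j i, i < j → j ≤ k → rk (g i) < rk (g j) := by
    intro j
    induction j with
    | zero => intro i hi; omega
    | succ j ih =>
      intro i hi hj
      have h1 := hrk j hj
      rcases Nat.lt_succ_iff_lt_or_eq.1 hi with h2 | rfl
      · exact (ih i h2 (by omega)).trans h1
      · exact h1
  refine ⟨k + 1, closeUp k g, isDicycle_closeUp ?_ ?_ ?_, ?_⟩
  · intro i j hi hj hij
    rcases lt_trichotomy i j with hl | hl | hl
    · exact absurd (hij ▸ hlt j i hl hj) (lt_irrefl _)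
    · exact hl
    · exact absurd (hij ▸ hlt i j hl hi) (lt_irrefl _)
  · intro i hi
    rw [(hgs i hi).1]
    exact h.arc _ (hgs i hi).2
  · rwa [hgk, hg0]
  · rw [cycSum_closeUp, hgk, hg0]
    have : ∑ i ∈ Finset.range k, w (g i) (g (i + 1))
        = ∑ i ∈ Finset.range k, (p (g (i + 1)) - p (g i)) := by
      refine Finset.sum_congr rfl fun i hi => ?_
      obtain ⟨h1, h2⟩ := hgs i (Finset.mem_range.1 hi)
      have := h.step _ h2
      rw [← h1] at this
      linarith
    rw [this, Finset.sum_range_sub (fun i => p (g i)), hgk, hg0]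

/-- A forest maximising the total potential exists, and in it only arcs to ancestors can violate
the potential inequality. -/
lemma exists_maximal {V : Type*} [Fintype V] (A : V → V → Prop) (w : V → V → ℝ) :
    ∃ par rk p, IsForest A w par rk p ∧
      ∀ u v, A u v → p v < p u + w u v → ∃ k, par^[k] u = v := by
  classical
  let S : Set (V → V) := {par | ∃ rk p, IsForest A w par rk p}
  have hne : S.Nonempty :=
    ⟨id, fun _ => 0, fun _ => 0, ⟨fun x hx => absurd rfl hx, fun x hx => absurd rfl hx,
      fun _ _ => rfl, fun x hx => absurd rfl hx⟩⟩
  let P : (V → V) → V → ℝ := fun par =>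
    if hp : ∃ p rk, IsForest A w par rk p then hp.choose else 0
  have hP : ∀ par rk p, IsForest A w par rk p → P par = p := by
    intro par rk p hf
    have hp : ∃ p rk, IsForest A w par rk p := ⟨p, rk, hf⟩
    simp only [P, dif_pos hp]
    exact potential_unique hp.choose_spec.choose_spec hf
  obtain ⟨par, ⟨rk, p, hf⟩, hmax⟩ :=
    S.toFinite.exists_maximalFor (fun par => ∑ x, P par x) S hne
  refine ⟨par, rk, p, hf, fun u v huv hlt => ?_⟩
  by_contra hanc
  obtain ⟨par', rk', p', hf', hv, hx⟩ := hf.rehang huv hanc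
  have hsum : ∑ x, p x < ∑ x, p' x := by
    refine Finset.sum_lt_sum (fun x _ => ?_) ⟨v, Finset.mem_univ v, by rw [hv]; exact hlt⟩
    rcases hx x with h | h <;> rw [h]
    linarith
  have hle := hmax (show par' ∈ S from ⟨rk', p', hf'⟩)
  simp only [hP _ _ _ hf, hP _ _ _ hf'] at hle
  exact absurd (hle hsum.le) (not_le.2 hsum)

end IsForest

/-! ### From a breaker function to a colouring -/

lemma exists_int_cycSum {V : Type*} {A : V → V → Prop} {T : V → V → ℝ} (hT : IsBreaker A T)
    {n : ℕ} {f : ZMod n → V} (hf : IsDicycle A n f) : ∃ N : ℤ, cycSum T n f = N := by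
  have h : ∀ i : ℕ, ∃ N : ℤ, T (f (i : ZMod n)) (f ((i : ZMod n) + 1)) = N := by
    intro i
    rcases hT.1 _ _ (hf.2.2 i) with h | h
    · exact ⟨0, by simp [h]⟩
    · exact ⟨1, by simp [h]⟩
  choose N hN using h
  refine ⟨∑ i ∈ Finset.range n, N i, ?_⟩
  unfold cycSum
  push_cast
  exact Finset.sum_congr rfl fun i _ => hN i

lemma cycSum_sub_mul {V : Type*} (c T : V → V → ℝ) (r : ℝ) (n : ℕ) (f : ZMod n → V) :
    cycSum (fun u v => c u v - r * T u v) n f = cycSum c n f - r * cycSum T n f := by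
  unfold cycSum
  rw [Finset.sum_sub_distrib, Finset.mul_sum]

lemma exists_spaced_of_breaker {V : Type*} [Fintype V]
    {A : V → V → Prop} (hsym : ∀ u v, A u v ↔ A v u) {c : V → V → ℝ} {L r : ℝ}
    (hL : ∀ u v, A u v → c u v + c v u ≤ L) (hLr : L ≤ r) (hr : 0 < r)
    {T : V → V → ℝ} (hT : IsBreaker A T)
    (hcyc : ∀ (n : ℕ) (f : ZMod n → V), IsDicycle A n f →
      0 < rmod (cycSum c n f) r → rmod (cycSum c n f) r < L →
      cycSum c n f ≤ r * cycSum T n f) :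
    ∃ p : V → ℝ, ∀ u v, A u v → Spaced c r p u v := by
  obtain ⟨par, rk, p, hf, hback⟩ :=
    IsForest.exists_maximal A (fun u v => c u v - r * T u v)
  have hviol : ∀ u v, A u v → p v < p u + (c u v - r * T u v) → Spaced c r p u v := by
    intro u v huv hlt
    obtain ⟨n, f, hdi, hsum⟩ := hf.exists_dicycle huv (hback u v huv hlt)
    rw [cycSum_sub_mul] at hsum
    have hs := hcyc n f hdi
    obtain ⟨N, hN⟩ := exists_int_cycSum hT hdi
    obtain ⟨t, ht⟩ : ∃ t : ℤ, T u v = t := by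
      rcases hT.1 u v huv with h | h
      · exact ⟨0, by simp [h]⟩
      · exact ⟨1, by simp [h]⟩
    have hLuv := hL u v huv
    have hdef : rmod (cycSum c n f) r = cycSum c n f - r * (⌊cycSum c n f / r⌋ : ℝ) := rfl
    have h0 := rmod_nonneg hr (cycSum c n f)
    have h1 := rmod_lt hr (cycSum c n f)
    set s := rmod (cycSum c n f) r
    set q := ⌊cycSum c n f / r⌋
    rw [hN, ht] at hsum
    rw [hN] at hs
    rw [ht] at hlt
    -- modulo `r`, `p v - p u` is `c u v - s`, and `s = 0` or `L ≤ s < r`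
    rcases h0.eq_or_lt with hz | hpos
    · refine ⟨q - N + t, ?_, ?_⟩ <;> push_cast <;> linarith
    · have hLs : L ≤ s := by
        by_contra hcon
        have := hs hpos (not_le.1 hcon)
        linarith
      refine ⟨q - N + t + 1, ?_, ?_⟩ <;> push_cast <;> linarith
  refine ⟨p, fun u v huv => ?_⟩
  by_cases h1 : p v < p u + (c u v - r * T u v)
  · exact hviol u v huv h1
  by_cases h2 : p u < p v + (c v u - r * T v u)
  · exact (hviol v u ((hsym u v).1 huv) h2).symm
  exact spaced_of_le hT huv (not_lt.1 h1) (not_lt.1 h2)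

/-- **Theorem 1.** Let `(G⃗, c)` be a finite weighted symmetric digraph, `L = L(G⃗,c)`
the maximum of `c u v + c v u` over arcs, and `r ≥ L`.  Then `(G⃗,c)` has a circular
`r`-coloring iff it has a breaker function `T` such that every dicycle `C` with
`0 < |C|_c (mod r) < L` satisfies `|C|_c ≤ r · |C|_T`. -/
theorem circular_coloring_iff_breaker {V : Type*} [Fintype V]
    (A : V → V → Prop) (hsym : ∀ u v, A u v ↔ A v u)
    (c : V → V → ℝ) (hc : ∀ u v, A u v → 0 < c u v)
    (L r : ℝ)
    (hL : IsGreatest {x : ℝ | ∃ u v, A u v ∧ x = c u v + c v u} L)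
    (hr : L ≤ r) :
    (∃ φ : V → ℝ, IsCircColoring A c r φ) ↔
      ∃ T : V → V → ℝ, IsBreaker A T ∧
        ∀ (n : ℕ) (f : ZMod n → V), IsDicycle A n f →
          0 < rmod (cycSum c n f) r → rmod (cycSum c n f) r < L →
          cycSum c n f ≤ r * cycSum T n f := by
  have hr0 : 0 < r := by
    obtain ⟨u, v, huv, hx⟩ := hL.1
    have h1 := hc u v huv
    have h2 := hc v u ((hsym u v).1 huv)
    linarith
  constructor
  · rintro ⟨φ, hφ⟩
    obtain ⟨T, hT, h⟩ := exists_breaker_of_coloring hc hr0 hφ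
    exact ⟨T, hT, fun n f hf _ _ => h n f hf⟩
  · rintro ⟨T, hT, h⟩
    obtain ⟨p, hp⟩ := exists_spaced_of_breaker hsym
      (fun u v huv => hL.2 ⟨u, v, huv, rfl⟩) hr hr0 hT h
    exact ⟨_, isCircColoring_rmod hsym hc hr0 hp⟩
end

section
/- Let (G⃗,c) be a finite weighted symmetric digraph and let r be a real number with r ≥ L(G⃗,c). If (G⃗,c) has a breaker function T such that every dicycle C of G⃗ satisfying 0 < |C|_c (mod r) < L(G⃗,c) satisfies |C|_c / |C|_T ≤ r, then (G⃗,c) has a circular r-coloring. -/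
/-- `par` is the parent function of a forest of arcs of `A` (`none` at the roots), `d` is a rank
function certifying that it has no cycles, and `f` is the total `w`-weight of the path from the root
to each vertex. -/
def IsForest_s1 {V : Type*} (A : V → V → Prop) (w : V → V → ℝ) (par : V → Option V)
    (d : V → ℕ) (f : V → ℝ) : Prop :=
  (∀ a b, par b = some a → A a b ∧ d a < d b ∧ f b = f a + w a b) ∧
    ∀ b, par b = none → f b = 0

/-- `Anc par a b`: the vertex `a` is `b` or an ancestor of `b` in the forest `par`. -/
def Anc {V : Type*} (par : V → Option V) : V → V → Prop :=
  Relation.ReflTransGen (fun a b => par b = some a)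

lemma anc_iff_of_ne {V : Type*} {par : V → Option V} {v a b : V} (h : par b = some a)
    (hb : b ≠ v) : Anc par v b ↔ Anc par v a := by
  constructor
  · intro hvb
    rcases Relation.ReflTransGen.cases_tail hvb with h1 | ⟨x, h1, h2⟩
    · exact absurd h1 hb
    · have : x = a := by
        have h3 : some x = some a := h2.symm.trans h
        exact Option.some.inj h3
      exact this ▸ h1
  · exact fun h1 => Relation.ReflTransGen.tail h1 h

lemma IsForest_s1.unique {V : Type*} {A : V → V → Prop} {w : V → V → ℝ} {par : V → Option V}
    {d d' : V → ℕ} {f f' : V → ℝ} (h : IsForest_s1 A w par d f) (h' : IsForest_s1 A w par d' f') :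
    f = f' := by
  have key : ∀ n v, d v = n → f v = f' v := by
    intro n
    induction n using Nat.strong_induction_on with
    | _ n ih =>
      intro v hv
      cases hp : par v with
      | none => rw [h.2 v hp, h'.2 v hp]
      | some a =>
        obtain ⟨_, hd, hf⟩ := h.1 a v hp
        rw [hf, (h'.1 a v hp).2.2, ih (d a) (hv ▸ hd) a rfl]
  exact funext fun v => key _ v rfl

/-- There is a forest whose total vertex weight is maximal: there are finitely many forests, and the
edgeless one exists. -/
lemma exists_max {V : Type*} [Fintype V] (A : V → V → Prop) (w : V → V → ℝ) :
    ∃ par d f, IsForest_s1 A w par d f ∧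
      ∀ par' d' f', IsForest_s1 A w par' d' f' → ∑ v, f' v ≤ ∑ v, f v := by
  classical
  let S : Set (V → Option V) := {p | ∃ d f, IsForest_s1 A w p d f}
  have hS : S.Finite := Set.toFinite S
  have hne : S.Nonempty :=
    ⟨fun _ => none, fun _ => 0, fun _ => 0, by simp [IsForest_s1]⟩
  let val : (V → Option V) → ℝ := fun p =>
    if h : ∃ d f, IsForest_s1 A w p d f then ∑ v, h.choose_spec.choose v else 0
  have hval : ∀ p d f, IsForest_s1 A w p d f → val p = ∑ v, f v := by
    intro p d f h
    have hex : ∃ d f, IsForest_s1 A w p d f := ⟨d, f, h⟩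
    simp only [val, dif_pos hex]
    rw [hex.choose_spec.choose_spec.unique h]
  obtain ⟨p, ⟨d, f, h⟩, hmax⟩ := Set.exists_max_image S val hS hne
  refine ⟨p, d, f, h, fun p' d' f' h' => ?_⟩
  rw [← hval _ _ _ h, ← hval _ _ _ h']
  exact hmax p' ⟨d', f', h'⟩

/-- Hanging `v` below `u`, where `v` is not an ancestor of `u`, shifts the weights of all
descendants of `v` by the same amount. -/
lemma IsForest_s1.reattach {V : Type*} {A : V → V → Prop} {w : V → V → ℝ} {par : V → Option V}
    {d : V → ℕ} {f : V → ℝ} (h : IsForest_s1 A w par d f) {u v : V} (huv : A u v)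
    (hanc : ¬ Anc par v u) :
    ∃ par' d' f', IsForest_s1 A w par' d' f' ∧
      ∀ x, (Anc par v x → f' x = f x + (f u + w u v - f v)) ∧ (¬ Anc par v x → f' x = f x) := by
  classical
  refine ⟨Function.update par v (some u),
    fun x => if Anc par v x then d x + d u + 1 else d x,
    fun x => if Anc par v x then f x + (f u + w u v - f v) else f x, ⟨?_, ?_⟩, ?_⟩
  · intro a b hab
    by_cases hb : b = v
    · subst hb
      have hua : u = a := by simpa using hab
      subst hua
      have hvv : Anc par b b := Relation.ReflTransGen.refl
      refine ⟨huv, ?_, ?_⟩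
      · simp only [if_pos hvv, if_neg hanc]; omega
      · simp only [if_pos hvv, if_neg hanc]; ring
    · have hab' : par b = some a := by simpa [Function.update_of_ne hb] using hab
      obtain ⟨h1, h2, h3⟩ := h.1 a b hab'
      have hiff := anc_iff_of_ne hab' hb
      by_cases hva : Anc par v a
      · refine ⟨h1, ?_, ?_⟩
        · simp only [if_pos hva, if_pos (hiff.2 hva)]; omega
        · simp only [if_pos hva, if_pos (hiff.2 hva)]; linarith
      · have hvb : ¬ Anc par v b := fun hh => hva (hiff.1 hh)
        refine ⟨h1, ?_, ?_⟩
        · simpa only [if_neg hva, if_neg hvb] using h2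
        · simpa only [if_neg hva, if_neg hvb] using h3
  · intro b hb
    have hbv : b ≠ v := by
      rintro rfl
      simp at hb
    have hb' : par b = none := by simpa [Function.update_of_ne hbv] using hb
    have hvb : ¬ Anc par v b := by
      intro hh
      rcases Relation.ReflTransGen.cases_tail hh with h1 | ⟨x, _, h2⟩
      · exact hbv h1
      · simp [hb'] at h2
    simp only [if_neg hvb]
    exact h.2 b hb'
  · intro x
    exact ⟨fun hx => if_pos hx, fun hx => if_neg hx⟩

lemma IsForest_s1.exists_path {V : Type*} {A : V → V → Prop} {w : V → V → ℝ} {par : V → Option V}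
    {d : V → ℕ} {f : V → ℝ} (h : IsForest_s1 A w par d f) {v u : V} (hanc : Anc par v u) :
    ∃ (k : ℕ) (g : ℕ → V), g 0 = v ∧ g k = u ∧
      ∀ i < k, A (g i) (g (i + 1)) ∧ d (g i) < d (g (i + 1)) ∧
        f (g (i + 1)) = f (g i) + w (g i) (g (i + 1)) := by
  induction hanc with
  | refl => exact ⟨0, fun _ => v, rfl, rfl, by simp⟩
  | @tail a b _ hab ih =>
    obtain ⟨k, g, h0, hk, hg⟩ := ih
    refine ⟨k + 1, fun i => if i ≤ k then g i else b, by simpa using h0, by simp, ?_⟩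
    intro i hi
    rcases Nat.lt_succ_iff_lt_or_eq.1 hi with hlt | rfl
    · simpa [hlt.le, Nat.succ_le_of_lt hlt] using hg i hlt
    · simpa [hk] using h.1 a b hab

/-- If `v` is an ancestor of `u`, the forest path from `v` to `u` together with the arc `uv` is a
dicycle of weight `f u - f v + w u v`. -/
lemma IsForest_s1.exists_dicycle {V : Type*} {A : V → V → Prop} {w : V → V → ℝ}
    {par : V → Option V} {d : V → ℕ} {f : V → ℝ} (h : IsForest_s1 A w par d f) {v u : V}
    (hanc : Anc par v u) (huv : A u v) :
    ∃ (n : ℕ) (F : ZMod n → V), IsDicycle A n F ∧ cycSum w n F = f u - f v + w u v := by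
  obtain ⟨k, g, h0, hk, hg⟩ := h.exists_path hanc
  have hmono : ∀ j ≤ k, ∀ i < j, d (g i) < d (g j) := by
    intro j
    induction j with
    | zero => intro _ i hi; omega
    | succ j ih =>
      intro hj i hi
      have hs := (hg j hj).2.1
      rcases Nat.lt_succ_iff_lt_or_eq.1 hi with hlt | rfl
      · exact (ih (by omega) i hlt).trans hs
      · exact hs
  have hsucc : ∀ i : ℕ, i < k → ((i : ZMod (k + 1)) + 1).val = i + 1 := by
    intro i hi
    have : ((i : ZMod (k + 1)) + 1) = ((i + 1 : ℕ) : ZMod (k + 1)) := by push_cast; rfl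
    rw [this, ZMod.val_natCast_of_lt (by omega)]
  have hlast : ((k : ZMod (k + 1)) + 1).val = 0 := by
    have : ((k : ZMod (k + 1)) + 1) = ((k + 1 : ℕ) : ZMod (k + 1)) := by push_cast; rfl
    rw [this, ZMod.natCast_self, ZMod.val_zero]
  refine ⟨k + 1, fun i => g i.val, ⟨Nat.succ_pos k, ?_, ?_⟩, ?_⟩
  · intro i j hij
    have hi := ZMod.val_lt i
    have hj := ZMod.val_lt j
    apply ZMod.val_injective
    have hij' : d (g i.val) = d (g j.val) := congrArg d hij
    rcases lt_trichotomy i.val j.val with hlt | heq | hlt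
    · have := hmono _ (by omega) _ hlt; omega
    · exact heq
    · have := hmono _ (by omega) _ hlt; omega
  · intro i
    have hi := ZMod.val_lt i
    have hcast : ((i.val : ℕ) : ZMod (k + 1)) = i := ZMod.natCast_zmod_val i
    rcases Nat.lt_succ_iff_lt_or_eq.1 hi with hlt | heq
    · have hs := hsucc _ hlt
      rw [hcast] at hs
      simpa only [hs] using (hg _ hlt).1
    · have hl' : (i + 1).val = 0 := by
        have : i = (k : ZMod (k + 1)) := hcast.symm.trans (congrArg _ heq)
        rw [this]; exact hlast
      simpa only [hl', heq, hk, h0] using huv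
  · unfold cycSum
    rw [Finset.sum_range_succ]
    have hsum : ∑ i ∈ Finset.range k,
        w (g (i : ZMod (k + 1)).val) (g ((i : ZMod (k + 1)) + 1).val) =
        ∑ i ∈ Finset.range k, (f (g (i + 1)) - f (g i)) := by
      refine Finset.sum_congr rfl fun i hi => ?_
      have hi' := Finset.mem_range.1 hi
      rw [hsucc i hi', ZMod.val_natCast_of_lt (by omega), (hg i hi').2.2]
      ring
    rw [hsum, Finset.sum_range_sub (fun i => f (g i))]
    beta_reduce
    rw [hlast, ZMod.val_natCast_of_lt (Nat.lt_succ_self k), hk, h0]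

lemma rmod_add_mul {r t : ℝ} (ht0 : 0 ≤ t) (htr : t < r) (m : ℤ) : rmod (t + r * m) r = t := by
  have hr : 0 < r := ht0.trans_lt htr
  have : ⌊(t + r * m) / r⌋ = m := by
    rw [Int.floor_eq_iff]
    constructor
    · rw [le_div_iff₀ hr]; linarith
    · rw [div_lt_iff₀ hr]; linarith
  rw [rmod, this]; ring

lemma le_circDist_rmod {r x y a b : ℝ} (ha : 0 < a) (hb : 0 < b) (m : ℤ)
    (h1 : a ≤ y - x + r * m) (h2 : y - x + r * m ≤ r - b) :
    a ≤ circDist r (rmod x r) (rmod y r) := by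
  set t := y - x + r * m with ht
  have heq : rmod y r - rmod x r = t + r * ((⌊x / r⌋ - ⌊y / r⌋ - m : ℤ) : ℝ) := by
    rw [ht, rmod, rmod]; push_cast; ring
  have hmod := rmod_add_mul (r := r) (t := t) (by linarith) (by linarith) (⌊x / r⌋ - ⌊y / r⌋ - m)
  rw [← heq] at hmod
  unfold circDist
  split_ifs with h
  · rw [h] at hmod
    simp [rmod] at hmod
    linarith
  · rw [hmod]; exact h1

/-- The `if` part of Theorem 1: if `(G⃗,c)` has a breaker function `T` such that
every dicycle `C` with `0 < |C|_c (mod r) < L(G⃗,c)` satisfies `|C|_c ≤ r · |C|_T`,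
then `(G⃗,c)` has a circular `r`-coloring (for any real `r ≥ L(G⃗,c)`). -/
theorem circular_coloring_of_breaker {V : Type*} [Fintype V]
    (A : V → V → Prop) (hsym : ∀ u v, A u v ↔ A v u)
    (c : V → V → ℝ) (hc : ∀ u v, A u v → 0 < c u v)
    (L r : ℝ)
    (hL : IsGreatest {x : ℝ | ∃ u v, A u v ∧ x = c u v + c v u} L)
    (hr : L ≤ r)
    (T : V → V → ℝ) (hT : IsBreaker A T)
    (hcyc : ∀ (n : ℕ) (f : ZMod n → V), IsDicycle A n f →
      0 < rmod (cycSum c n f) r → rmod (cycSum c n f) r < L →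
      cycSum c n f ≤ r * cycSum T n f) :
    ∃ φ : V → ℝ, IsCircColoring A c r φ := by
  classical
  obtain ⟨⟨u₀, v₀, hA₀, hL₀⟩, hLub⟩ := hL
  have hr0 : 0 < r := by
    have h1 := hc _ _ hA₀
    have h2 := hc _ _ ((hsym _ _).1 hA₀)
    linarith
  set w : V → V → ℝ := fun u v => c u v - r * T u v with hw
  obtain ⟨par, d, f, hF, hmax⟩ := exists_max A w
  have claim : ∀ u v, A u v → f u + w u v ≤ f v ∨
      ∃ m : ℤ, c u v ≤ f v - f u + r * m ∧ f v - f u + r * m ≤ r - c v u := by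
    intro u v huv
    have hLuv : c u v + c v u ≤ L := hLub ⟨u, v, huv, rfl⟩
    by_cases hanc : Anc par v u
    · obtain ⟨n, F, hC, hsum⟩ := hF.exists_dicycle hanc huv
      have hsplit : cycSum w n F = cycSum c n F - r * cycSum T n F := by
        simp only [cycSum, hw, Finset.sum_sub_distrib, Finset.mul_sum]
      have hint : ∃ m : ℤ, cycSum T n F = m := by
        refine Finset.sum_induction _ (fun x : ℝ => ∃ m : ℤ, x = m) ?_ ⟨0, by simp⟩ ?_
        · rintro _ _ ⟨a, rfl⟩ ⟨b, rfl⟩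
          exact ⟨a + b, by push_cast; rfl⟩
        · intro i _
          rcases hT.1 _ _ (hC.2.2 i) with h | h
          · exact ⟨0, by rw [h]; simp⟩
          · exact ⟨1, by rw [h]; simp⟩
      obtain ⟨m, hm⟩ := hint
      obtain ⟨t, htuv⟩ : ∃ t : ℤ, T u v = t := by
        rcases hT.1 u v huv with h | h
        · exact ⟨0, by rw [h]; simp⟩
        · exact ⟨1, by rw [h]; simp⟩
      have hs0 := rmod_nonneg hr0 (cycSum c n F)
      have hsr := rmod_lt hr0 (cycSum c n F)
      have hs : rmod (cycSum c n F) r = cycSum c n F - r * (⌊cycSum c n F / r⌋ : ℝ) := rfl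
      have hwuv : w u v = c u v - r * t := by simp only [hw, htuv]
      rw [hm] at hsplit
      rcases hs0.eq_or_lt with h0 | hpos
      · -- The residue is `0`: `f v - f u` is congruent to `c u v`.
        right
        refine ⟨⌊cycSum c n F / r⌋ - m + t, ?_, ?_⟩ <;> push_cast <;> linarith
      · by_cases hlt : rmod (cycSum c n F) r < L
        · left
          have := hcyc n F hC hpos hlt
          rw [hm] at this
          linarith
        · -- The residue `s` is at least `L`: `f v - f u` is congruent to `c u v - s + r`.
          right
          refine ⟨⌊cycSum c n F / r⌋ - m + t + 1, ?_, ?_⟩ <;> push_cast <;> linarith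
    · left
      by_contra! hcon
      obtain ⟨par', d', f', hF', hf'⟩ := hF.reattach huv hanc
      have hle := hmax par' d' f' hF'
      refine absurd hle (not_le.2 (Finset.sum_lt_sum (fun x _ => ?_) ⟨v, Finset.mem_univ v, ?_⟩))
      · by_cases hx : Anc par v x
        · rw [(hf' x).1 hx]; linarith
        · rw [(hf' x).2 hx]
      · rw [(hf' v).1 Relation.ReflTransGen.refl]; linarith
  refine ⟨fun v => rmod (f v) r, fun v => ⟨rmod_nonneg hr0 _, rmod_lt hr0 _⟩, ?_⟩
  intro u v huv
  have hvu := (hsym u v).1 huv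
  obtain ⟨m, h1, h2⟩ : ∃ m : ℤ, c u v ≤ f v - f u + r * m ∧ f v - f u + r * m ≤ r - c v u := by
    rcases claim u v huv with h | h
    · rcases claim v u hvu with h' | ⟨m, h1, h2⟩
      · have hsum : r * T u v + r * T v u = r := by rw [← mul_add, hT.2 u v huv, mul_one]
        simp only [hw] at h h'
        obtain ⟨t, htuv⟩ : ∃ t : ℤ, T u v = t := by
          rcases hT.1 u v huv with h | h
          · exact ⟨0, by rw [h]; simp⟩
          · exact ⟨1, by rw [h]; simp⟩
        refine ⟨t, ?_, ?_⟩ <;> rw [← htuv] <;> linarith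
      · refine ⟨1 - m, ?_, ?_⟩ <;> push_cast <;> linarith
    · exact h
  exact le_circDist_rmod (hc u v huv) (hc v u hvu) m h1 h2
end

section
/- Let (G⃗,c) be a finite weighted symmetric digraph and let r be a positive real number. If (G⃗,c) has a circular r-coloring, then (G⃗,c) has a breaker function T such that EVERY dicycle C of G⃗ satisfies |C|_c ≤ r·|C|_T. -/
/-- For distinct points of `[0, r)`, the residue of `y - x` is `y - x` itself, or `y - x + r`
when `y < x`. -/
lemma circDist_eq {r x y : ℝ} (hr : 0 < r) (hx : 0 ≤ x ∧ x < r) (hy : 0 ≤ y ∧ y < r)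
    (hxy : x ≠ y) : circDist r x y = y - x + r * (if y < x then 1 else 0) := by
  rw [circDist, if_neg hxy, rmod]
  split_ifs with h
  · have hf : ⌊(y - x) / r⌋ = -1 := by
      rw [Int.floor_eq_iff, le_div_iff₀ hr, div_lt_iff₀ hr]
      push_cast
      constructor <;> linarith
    rw [hf]
    push_cast
    ring
  · have hf : ⌊(y - x) / r⌋ = 0 := by
      rw [Int.floor_eq_iff, le_div_iff₀ hr, div_lt_iff₀ hr]
      push_cast
      constructor <;> linarith
    rw [hf]
    push_cast
    ring

/-- If a finite weighted symmetric digraph `(G⃗,c)` has a circular `r`-coloring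
(`r > 0`), then it has a breaker function `T` such that **every** dicycle `C`
satisfies `|C|_c ≤ r · |C|_T`. -/
theorem breaker_of_circular_coloring {V : Type*} [Fintype V]
    (A : V → V → Prop) (hsym : ∀ u v, A u v ↔ A v u)
    (c : V → V → ℝ) (hc : ∀ u v, A u v → 0 < c u v)
    (r : ℝ) (hr : 0 < r)
    (φ : V → ℝ) (hφ : IsCircColoring A c r φ) :
    ∃ T : V → V → ℝ, IsBreaker A T ∧
      ∀ (n : ℕ) (f : ZMod n → V), IsDicycle A n f →
        cycSum c n f ≤ r * cycSum T n f := by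
  obtain ⟨hrange, hcol⟩ := hφ
  have hne : ∀ u v, A u v → φ u ≠ φ v := by
    intro u v h he
    have h1 := hcol u v h
    rw [circDist, if_pos he] at h1
    exact absurd (hc u v h) (not_lt.mpr h1)
  refine ⟨fun u v => if φ v < φ u then 1 else 0, ⟨?_, ?_⟩, ?_⟩
  · intro u v _
    by_cases h : φ v < φ u <;> simp [h]
  · intro u v h
    rcases lt_or_gt_of_ne (hne u v h) with h1 | h1 <;> simp [h1, h1.le]
  · rintro n f ⟨_, _, harc⟩
    have htel : ∑ i ∈ Finset.range n, (φ (f ((i : ZMod n) + 1)) - φ (f (i : ZMod n))) = 0 := by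
      have h := Finset.sum_range_sub (fun i : ℕ => φ (f (i : ZMod n))) n
      simpa using h
    unfold cycSum
    rw [Finset.mul_sum]
    refine le_of_le_of_eq ?_ (zero_add _)
    refine le_of_le_of_eq ?_ (congrArg (· + _) htel)
    rw [← Finset.sum_add_distrib]
    refine Finset.sum_le_sum fun i _ => ?_
    have ha := harc (i : ZMod n)
    exact (hcol _ _ ha).trans_eq (circDist_eq hr (hrange _) (hrange _) (hne _ _ ha))
end

section
/- Let (G⃗,c) be a finite weighted symmetric digraph and let r be a positive real number. Then (G⃗,c) has a circular r-coloring if and only if (G⃗,c) has a breaker function T such that every dicycle C of G⃗ satisfies |C|_c ≤ r·|C|_T. Consequently, the circular chromatic number χ_c(G⃗,c) = inf{ p > 0 : (G⃗,c) has a circular p-coloring } equals the minimum over all breaker functions T of (G⃗,c) of the maximum over all dicycles C of G⃗ of |C|_c / |C|_T (quotients with zero denominator being +∞). -/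
open scoped ENNReal

/-! ### Weights of walks -/

/-- The sum of the arc-weighting `w` over consecutive pairs of a list of vertices. -/
noncomputable def walkSum {V : Type*} (w : V → V → ℝ) : List V → ℝ
  | [] => 0
  | [_] => 0
  | x :: y :: l => w x y + walkSum w (y :: l)

lemma walkSum_append {V : Type*} (w : V → V → ℝ) (v : V) (b : List V) :
    ∀ a : List V, walkSum w (a ++ v :: b) = walkSum w (a ++ [v]) + walkSum w (v :: b)
  | [] => by simp [walkSum]
  | [x] => by simp [walkSum]
  | x :: y :: a => by
    have := walkSum_append w v b (y :: a)
    simp only [List.cons_append, walkSum] at this ⊢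
    rw [this]; ring

lemma walkSum_eq_sum {V : Type*} (w : V → V → ℝ) (d : V) :
    ∀ (x : V) (l : List V), walkSum w (x :: l) =
      ∑ i ∈ Finset.range l.length, w ((x :: l).getD i d) ((x :: l).getD (i + 1) d)
  | x, [] => by simp [walkSum]
  | x, y :: l => by
    rw [walkSum, walkSum_eq_sum w d y l, List.length_cons, Finset.sum_range_succ', add_comm]
    simp

/-- A closed walk `v, a, v` with `v :: a` duplicate-free is a dicycle in the `ZMod` encoding. -/
lemma exists_dicycle_of_list {V : Type*} (A : V → V → Prop) (v : V) (a : List V)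
    (hnd : (v :: a).Nodup) (hch : List.IsChain A (v :: (a ++ [v]))) :
    ∃ f : ZMod (a.length + 1) → V, IsDicycle A (a.length + 1) f ∧
      ∀ w : V → V → ℝ, cycSum w (a.length + 1) f = walkSum w (v :: (a ++ [v])) := by
  let f : ZMod (a.length + 1) → V := fun i => (v :: a).getD i.val v
  -- The index `a.length + 1` wraps around to `0`, matching the repeated last vertex `v`.
  have hf : ∀ i : ℕ, i ≤ a.length + 1 →
      f (i : ZMod (a.length + 1)) = (v :: (a ++ [v])).getD i v := by
    intro i hi
    rcases hi.lt_or_eq with hi | rfl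
    · simp only [f]
      rw [ZMod.val_cast_of_lt hi, ← List.cons_append, List.getD_append _ _ _ _ (by simpa using hi)]
    · simp only [f]
      rw [ZMod.natCast_self, ZMod.val_zero]
      simp
  have hf' : ∀ i : ℕ, i < a.length + 1 →
      f ((i : ZMod (a.length + 1)) + 1) = (v :: (a ++ [v])).getD (i + 1) v := by
    intro i hi
    rw [← hf (i + 1) hi]
    push_cast
    rfl
  refine ⟨f, ⟨Nat.succ_pos _, ?_, ?_⟩, ?_⟩
  · intro i j hij
    have hi : i.val < (v :: a).length := ZMod.val_lt i
    have hj : j.val < (v :: a).length := ZMod.val_lt j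
    simp only [f] at hij
    rw [List.getD_eq_getElem _ _ hi, List.getD_eq_getElem _ _ hj, hnd.getElem_inj_iff] at hij
    exact ZMod.val_injective _ hij
  · intro i
    have hi : i.val < a.length + 1 := ZMod.val_lt i
    have h1 := hf i.val hi.le
    have h2 := hf' i.val hi
    rw [ZMod.natCast_zmod_val] at h1 h2
    rw [h1, h2, List.getD_eq_getElem _ _ (by simp; omega),
      List.getD_eq_getElem _ _ (by simp; omega)]
    exact List.isChain_iff_getElem.mp hch _ (by simp; omega)
  · intro w
    rw [walkSum_eq_sum w v, cycSum]
    refine Finset.sum_congr (by simp) fun i hi => ?_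
    have hi : i < a.length + 1 := by simpa using hi
    rw [hf i hi.le, hf' i hi]

/-! ### Potentials -/

/-- If no dicycle has positive weight, then a potential exists, namely the maximal weight of a
simple directed path starting at the given vertex. -/
lemma exists_potential {V : Type*} [Fintype V] (A : V → V → Prop) (w : V → V → ℝ)
    (hw : ∀ (n : ℕ) (f : ZMod n → V), IsDicycle A n f → cycSum w n f ≤ 0) :
    ∃ q : V → ℝ, ∀ u v, A u v → w u v + q v ≤ q u := by
  classical
  let S : V → Set (List V) := fun u => {l | (u :: l).Nodup ∧ List.IsChain A (u :: l)}
  have hfin : ∀ u, (S u).Finite := fun u =>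
    (Set.finite_coe_iff.mp (inferInstanceAs (Finite {l : List V // l.Nodup}))).subset
      fun l hl => (List.nodup_cons.mp hl.1).2
  have hne : ∀ u, (S u).Nonempty := fun u => ⟨[], by simp [S]⟩
  choose g hgS hg using fun u => Set.exists_max_image (S u) (fun l => walkSum w (u :: l))
    (hfin u) (hne u)
  refine ⟨fun u => walkSum w (u :: g u), fun u v huv => ?_⟩
  have hch : List.IsChain A (u :: v :: g v) := List.isChain_cons_cons.mpr ⟨huv, (hgS v).2⟩
  change walkSum w (u :: v :: g v) ≤ _
  by_cases hu : u ∈ v :: g v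
  · obtain ⟨a, b, hab⟩ := List.append_of_mem hu
    have hnd := (hgS v).1
    rw [hab] at hch hnd ⊢
    -- `u, a, u, b`: excise the dicycle `u, a, u`.
    have hchain : List.IsChain A (u :: (a ++ [u])) := by
      have : (u :: (a ++ [u])) <+: (u :: (a ++ u :: b)) := by
        refine ⟨b, by simp⟩
      exact hch.prefix this
    have hnd' : (u :: a).Nodup := by
      have h := (List.nodup_middle.mp hnd)
      exact h.sublist (by simp)
    obtain ⟨f, hf, hsum⟩ := exists_dicycle_of_list A u a hnd' hchain
    have h0 := hw _ f hf
    rw [hsum] at h0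
    have hb : b ∈ S u := by
      refine ⟨hnd.sublist (List.sublist_append_right _ _), ?_⟩
      exact hch.suffix ⟨u :: a, by simp⟩
    have := hg u b hb
    have hs := walkSum_append w u b (u :: a)
    simp only [List.cons_append] at hs
    linarith
  · exact hg u _ ⟨List.nodup_cons.mpr ⟨hu, (hgS v).1⟩, hch⟩

/-- Differences of a vertex function sum to zero around a closed walk. -/
lemma cycSum_telescope {V : Type*} (φ : V → ℝ) (n : ℕ) (f : ZMod n → V) :
    cycSum (fun u v => φ v - φ u) n f = 0 := by
  have := Finset.sum_range_sub (fun i : ℕ => φ (f (i : ZMod n))) n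
  simpa [cycSum] using this

/-! ### Circular distance -/

lemma circDist_eq_s4 {r x y d : ℝ} (hr : 0 < r) (m : ℤ) (h : y - x = d + r * m)
    (hd : 0 < d) (hdr : d < r) : circDist r x y = d := by
  have hfl : ⌊(y - x) / r⌋ = m := by
    rw [Int.floor_eq_iff, le_div_iff₀ hr, div_lt_iff₀ hr]
    constructor <;> nlinarith
  have hne : x ≠ y := by
    rintro rfl
    have : m = 0 := by simpa using hfl.symm
    subst this
    simp at h
    linarith
  rw [circDist, if_neg hne, rmod, hfl]
  linarith

lemma le_of_circDist {r x y c : ℝ} (hr : 0 < r) (hx : 0 ≤ x ∧ x < r) (hy : 0 ≤ y ∧ y < r)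
    (hc : 0 < c) (h : c ≤ circDist r x y) :
    x ≠ y ∧ c ≤ y - x + r * (if y < x then 1 else 0) := by
  have hne : x ≠ y := by
    rintro rfl
    simp [circDist] at h
    linarith
  refine ⟨hne, ?_⟩
  split_ifs with hlt
  · rwa [circDist_eq_s4 hr (-1) (d := y - x + r) (by push_cast; ring) (by linarith) (by linarith),
      ← mul_one r] at h
  · have : x < y := lt_of_le_of_ne (not_lt.mp hlt) hne
    rw [circDist_eq_s4 hr 0 (d := y - x) (by simp) (by linarith) (by linarith)] at h
    linarith

/-! ### Colorings and breaker functions -/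

lemma coloring_iff_breaker {V : Type*} [Fintype V]
    (A : V → V → Prop) (hsym : ∀ u v, A u v ↔ A v u)
    (c : V → V → ℝ) (hc : ∀ u v, A u v → 0 < c u v) (r : ℝ) (hr : 0 < r) :
    (∃ φ : V → ℝ, IsCircColoring A c r φ) ↔
        ∃ T : V → V → ℝ, IsBreaker A T ∧
          ∀ (n : ℕ) (f : ZMod n → V), IsDicycle A n f →
            cycSum c n f ≤ r * cycSum T n f := by
  constructor
  · rintro ⟨φ, hφ, hcol⟩
    have key := fun u v (h : A u v) => le_of_circDist hr (hφ u) (hφ v) (hc u v h) (hcol u v h)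
    refine ⟨fun u v => if φ v < φ u then 1 else 0, ⟨fun u v _ => ?_, fun u v h => ?_⟩, ?_⟩
    · dsimp only
      split_ifs <;> simp
    · rcases lt_or_gt_of_ne (key u v h).1 with h | h <;> simp [h, h.le]
    · intro n f hf
      have htel := cycSum_telescope φ n f
      have hle : cycSum c n f ≤ cycSum (fun u v => φ v - φ u) n f +
          r * cycSum (fun u v => if φ v < φ u then 1 else 0) n f := by
        simp only [cycSum]
        rw [Finset.mul_sum, ← Finset.sum_add_distrib]
        exact Finset.sum_le_sum fun i _ => (key _ _ (hf.2.2 i)).2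
      linarith
  · rintro ⟨T, ⟨hT01, hT⟩, hcyc⟩
    obtain ⟨q, hq⟩ := exists_potential A (fun u v => c u v - r * T u v) (by
      intro n f hf
      have := hcyc n f hf
      simp only [cycSum, Finset.mul_sum, Finset.sum_sub_distrib] at this ⊢
      linarith)
    refine ⟨fun v => rmod (-q v) r, fun v => ?_, fun u v huv => ?_⟩
    · have h1 := Int.floor_le (-q v / r)
      have h2 := Int.lt_floor_add_one (-q v / r)
      rw [le_div_iff₀ hr] at h1
      rw [div_lt_iff₀ hr] at h2
      simp only [rmod]
      constructor <;> nlinarith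
    · have hvu := (hsym u v).mp huv
      have h1 := hq u v huv
      have h2 := hq v u hvu
      have h3 := hc u v huv
      have h4 := hc v u hvu
      have h5 : T v u = 1 - T u v := by linarith [hT u v huv]
      simp only [h5] at h1 h2
      obtain ⟨t, ht⟩ : ∃ t : ℤ, T u v = t := by
        rcases hT01 u v huv with h | h
        · exact ⟨0, by simp [h]⟩
        · exact ⟨1, by simp [h]⟩
      rw [circDist_eq_s4 hr (⌊-q u / r⌋ - ⌊-q v / r⌋ - t) (d := q u - q v + r * T u v)
        (by simp only [rmod]; push_cast; rw [ht]; ring) (by linarith) (by linarith)]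
      linarith

/-- When `|C|_T = 0`, the quotient is `⊤` for `|C|_c > 0` and `0` for `|C|_c ≤ 0`, so the equivalence
holds for such dicycles as well. -/
lemma sSup_ratio_le_iff {V : Type*} (A : V → V → Prop)
    (c T : V → V → ℝ) (hT : IsBreaker A T) (p : ℝ) (hp : 0 < p) :
    sSup {z : ℝ≥0∞ | ∃ (n : ℕ) (f : ZMod n → V), IsDicycle A n f ∧
        z = ENNReal.ofReal (cycSum c n f) / ENNReal.ofReal (cycSum T n f)} ≤ ENNReal.ofReal p ↔
      ∀ (n : ℕ) (f : ZMod n → V), IsDicycle A n f → cycSum c n f ≤ p * cycSum T n f := by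
  have key : ∀ (n : ℕ) (f : ZMod n → V), IsDicycle A n f →
      (ENNReal.ofReal (cycSum c n f) / ENNReal.ofReal (cycSum T n f) ≤ ENNReal.ofReal p ↔
        cycSum c n f ≤ p * cycSum T n f) := by
    intro n f hf
    have hTnn : 0 ≤ cycSum T n f := Finset.sum_nonneg fun i _ => by
      rcases hT.1 _ _ (hf.2.2 i) with h | h <;> simp [h]
    rw [ENNReal.div_le_iff_le_mul (Or.inr ENNReal.ofReal_ne_top)
      (Or.inl ENNReal.ofReal_ne_top), ← ENNReal.ofReal_mul hp.le,
      ENNReal.ofReal_le_ofReal_iff (mul_nonneg hp.le hTnn)]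
  rw [sSup_le_iff]
  constructor
  · intro h n f hf
    exact (key n f hf).mp (h _ ⟨n, f, hf, rfl⟩)
  · rintro h _ ⟨n, f, hf, rfl⟩
    exact (key n f hf).mpr (h n f hf)

/-- A finite weighted symmetric digraph `(G⃗,c)` has a circular `r`-coloring
(`r > 0`) iff it has a breaker function `T` with `|C|_c ≤ r · |C|_T` for every
dicycle `C`.  Consequently `χ_c(G⃗,c) = inf { p > 0 : (G⃗,c) has a circular
p-coloring }` equals the minimum, over all breaker functions `T`, of the maximum
over all dicycles `C` of `|C|_c / |C|_T` (computed in `ℝ≥0∞`, so that quotients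
with zero denominator are `+∞`). -/
theorem circular_chromatic_number_eq_min_max {V : Type*} [Fintype V]
    (A : V → V → Prop) (hsym : ∀ u v, A u v ↔ A v u)
    (c : V → V → ℝ) (hc : ∀ u v, A u v → 0 < c u v) :
    (∀ r : ℝ, 0 < r →
      ((∃ φ : V → ℝ, IsCircColoring A c r φ) ↔
        ∃ T : V → V → ℝ, IsBreaker A T ∧
          ∀ (n : ℕ) (f : ZMod n → V), IsDicycle A n f →
            cycSum c n f ≤ r * cycSum T n f))
    ∧
    sInf {x : ℝ≥0∞ | ∃ p : ℝ, 0 < p ∧ x = ENNReal.ofReal p ∧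
        ∃ φ : V → ℝ, IsCircColoring A c p φ}
      = sInf {y : ℝ≥0∞ | ∃ T : V → V → ℝ, IsBreaker A T ∧
          y = sSup {z : ℝ≥0∞ | ∃ (n : ℕ) (f : ZMod n → V), IsDicycle A n f ∧
            z = ENNReal.ofReal (cycSum c n f) / ENNReal.ofReal (cycSum T n f)}} := by
  have main := coloring_iff_breaker A hsym c hc
  refine ⟨main, le_antisymm ?_ ?_⟩
  · refine le_sInf ?_
    rintro _ ⟨T, hT, rfl⟩
    -- Any real `p` above the supremum admits a coloring, also when the supremum is `0`.
    refine le_of_forall_gt_imp_ge_of_dense fun x hx => ?_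
    rcases eq_or_ne x ⊤ with rfl | hxt
    · exact le_top
    have hp : 0 < x.toReal := ENNReal.toReal_pos (ne_bot_of_gt hx) hxt
    have hxp : ENNReal.ofReal x.toReal = x := ENNReal.ofReal_toReal hxt
    refine sInf_le ⟨x.toReal, hp, hxp.symm, (main _ hp).mpr ⟨T, hT, ?_⟩⟩
    exact (sSup_ratio_le_iff A c T hT _ hp).mp (hxp.symm ▸ hx.le)
  · refine le_sInf ?_
    rintro _ ⟨p, hp, rfl, hφ⟩
    obtain ⟨T, hT, hcyc⟩ := (main p hp).mp hφ
    refine le_trans (sInf_le ⟨T, hT, rfl⟩) ((sSup_ratio_le_iff A c T hT p hp).mpr hcyc)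
end

section
/- Let G be a finite simple graph and let k and d be integers with k ≥ 2d ≥ 1. If G has an orientation ω such that τ(C,ω) ≤ k/d for every cycle C of G satisfying 1 ≤ d·|C| (mod k) ≤ 2d−1, then G has a (k,d)-coloring. -/
/-- A cycle of length `n` in a graph `G`, encoded (together with a chosen direction
of traversal) as an injective map `f : ZMod n → V` (so the vertices
`f 0, …, f (n-1)` are distinct) with each `f i, f (i+1)` adjacent. -/
def IsCycle {V : Type*} (G : SimpleGraph V) (n : ℕ) (f : ZMod n → V) : Prop :=
  0 < n ∧ Function.Injective f ∧ ∀ i : ZMod n, G.Adj (f i) (f (i + 1))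

/-- An orientation of `G`: for each edge `u v`, exactly one of the arcs `u → v`,
`v → u` is chosen (`o u v = true` meaning the edge is oriented from `u` to `v`). -/
def IsOrientation {V : Type*} (G : SimpleGraph V) (o : V → V → Bool) : Prop :=
  ∀ u v, G.Adj u v → (o u v = true ↔ o v u = false)

/-- `|C_ω^+|`: the number of edges of the cycle `f` whose orientation under `o`
agrees with the direction of traversal. -/
def plusCount {V : Type*} (o : V → V → Bool) (n : ℕ) (f : ZMod n → V) : ℕ :=
  ((Finset.range n).filter
    (fun (i : ℕ) => o (f (i : ZMod n)) (f ((i : ZMod n) + 1)) = true)).card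

/-- `τ(C, ω) ≤ r`: both `|C_ω^+|` and `|C_ω^-| = |C| - |C_ω^+|` are positive, and
`|C| ≤ r·|C_ω^+|` and `|C| ≤ r·|C_ω^-|` (so `τ = max{|C|/|C_ω^+|, |C|/|C_ω^-|} ≤ r`,
with quotients by zero read as `+∞`). -/
def TauLe {V : Type*} (o : V → V → Bool) (n : ℕ) (f : ZMod n → V) (r : ℝ) : Prop :=
  0 < plusCount o n f ∧ plusCount o n f < n ∧
    (n : ℝ) ≤ r * (plusCount o n f : ℝ) ∧
    (n : ℝ) ≤ r * ((n : ℝ) - (plusCount o n f : ℝ))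

/-- A circular `r`-coloring of a graph `G`: a map `f : V → [0, r)` with
`1 ≤ |f x - f y| ≤ r - 1` for every edge `x y`. -/
def IsCircGraphColoring {V : Type*} (G : SimpleGraph V) (r : ℝ) (f : V → ℝ) : Prop :=
  (∀ v, 0 ≤ f v ∧ f v < r) ∧
    ∀ u v, G.Adj u v → 1 ≤ |f u - f v| ∧ |f u - f v| ≤ r - 1

/-- A `(k,d)`-coloring of `G`: a map `f : V → {0, 1, …, k-1}` with
`d ≤ |f x - f y| ≤ k - d` for every edge `x y`. -/
def IsKDColoring {V : Type*} (G : SimpleGraph V) (k d : ℕ) (f : V → ℤ) : Prop :=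
  (∀ v, 0 ≤ f v ∧ f v < (k : ℤ)) ∧
    ∀ u v, G.Adj u v → (d : ℤ) ≤ |f u - f v| ∧ |f u - f v| ≤ (k : ℤ) - (d : ℤ)

/-- The weight of traversing an edge from `u` to `v`: it is `d` along the orientation and `d - k`
against it. -/
def arcWeight {V : Type*} (k d : ℕ) (o : V → V → Bool) (u v : V) : ℤ :=
  if o u v = true then (d : ℤ) else (d : ℤ) - k

/-- `p` is the parent map of a rooted spanning forest of `G` (with `none` at the roots), and `f` is
the weight of the path from the root.  Acyclicity is witnessed by a rank `r` that increases from
parent to child. -/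
structure ForestPotential {V : Type*} (G : SimpleGraph V) (k d : ℕ) (o : V → V → Bool)
    (p : V → Option V) (f : V → ℤ) (r : V → ℕ) : Prop where
  root : ∀ v, p v = none → f v = 0
  adj : ∀ u v, p v = some u → G.Adj u v
  step : ∀ u v, p v = some u → f v = f u + arcWeight k d o u v
  rank : ∀ u v, p v = some u → r u < r v

/-- `y` is an ancestor of `x` (possibly `x` itself) for the parent map `p`. -/
def Ancestor {V : Type*} (p : V → Option V) (y x : V) : Prop :=
  Relation.ReflTransGen (fun u v => p v = some u) y x

section

variable {V : Type*} {G : SimpleGraph V} {k d : ℕ} {o : V → V → Bool}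

theorem ForestPotential.unique {p : V → Option V} {f f' : V → ℤ} {r r' : V → ℕ}
    (h : ForestPotential G k d o p f r) (h' : ForestPotential G k d o p f' r') : f = f' := by
  have key : ∀ n v, r v = n → f v = f' v := by
    intro n
    induction n using Nat.strong_induction_on with
    | _ n ih =>
      intro v hv
      cases hp : p v with
      | none => rw [h.root v hp, h'.root v hp]
      | some u =>
        rw [h.step u v hp, h'.step u v hp, ih (r u) (hv ▸ h.rank u v hp) u rfl]
  exact funext fun v => key _ v rfl

theorem ForestPotential.rank_le {p : V → Option V} {f : V → ℤ} {r : V → ℕ}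
    (h : ForestPotential G k d o p f r) {y x : V} (hyx : Ancestor p y x) : r y ≤ r x := by
  induction hyx with
  | refl => exact le_rfl
  | tail _ hs ih => exact ih.trans (h.rank _ _ hs).le

theorem ForestPotential.antisymm {p : V → Option V} {f : V → ℤ} {r : V → ℕ}
    (h : ForestPotential G k d o p f r) {y x : V} (hyx : Ancestor p y x) (hxy : Ancestor p x y) :
    x = y := by
  rcases Relation.ReflTransGen.cases_tail hyx with he | ⟨u, hu, hs⟩
  · exact he
  · have h1 := h.rank_le hu
    have h2 := h.rank_le hxy
    have h3 := h.rank _ _ hs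
    omega

/-- Moving the subtree at `y` below a neighbour `x` outside of it shifts the potential on that
subtree by a constant. -/
theorem ForestPotential.reattach {p : V → Option V} {f : V → ℤ} {r : V → ℕ}
    (h : ForestPotential G k d o p f r) {x y : V} (hxy : G.Adj x y) (hn : ¬ Ancestor p y x) :
    ∃ p' r' f', ForestPotential G k d o p' f' r' ∧
      (∀ v, Ancestor p y v → f' v = f v + (f x + arcWeight k d o x y - f y)) ∧
      (∀ v, ¬ Ancestor p y v → f' v = f v) := by
  classical
  have hyy : Ancestor p y y := Relation.ReflTransGen.refl
  have hiff : ∀ u v, v ≠ y → p v = some u → (Ancestor p y v ↔ Ancestor p y u) := by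
    intro u v hv hp
    constructor
    · intro ha
      rcases Relation.ReflTransGen.cases_tail ha with he | ⟨u', hu, hs⟩
      · exact absurd he hv
      · have hs' : p v = some u' := hs
        rw [hp] at hs'
        cases hs'
        exact hu
    · intro ha
      exact Relation.ReflTransGen.tail ha hp
  refine ⟨fun v => if v = y then some x else p v,
    fun v => if Ancestor p y v then r v + r x + 1 else r v,
    fun v => if Ancestor p y v then f v + (f x + arcWeight k d o x y - f y) else f v,
    ⟨?_, ?_, ?_, ?_⟩, ?_, ?_⟩
  · intro v hv
    by_cases hvy : v = y
    · simp [hvy] at hv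
    · simp only [hvy, if_false] at hv
      have : ¬ Ancestor p y v := by
        intro ha
        rcases Relation.ReflTransGen.cases_tail ha with he | ⟨u', hu, hs⟩
        · exact hvy he
        · have hs' : p v = some u' := hs
          rw [hv] at hs'
          cases hs'
      simp only [this, if_false]
      exact h.root v hv
  · intro u v hv
    by_cases hvy : v = y
    · simp only [hvy, if_true, Option.some.injEq] at hv
      rw [hvy, ← hv]
      exact hxy
    · simp only [hvy, if_false] at hv
      exact h.adj u v hv
  · intro u v hv
    by_cases hvy : v = y
    · simp only [hvy, if_true, Option.some.injEq] at hv
      subst hv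
      subst hvy
      simp only [hn, hyy, if_true, if_false]
      ring
    · simp only [hvy, if_false] at hv
      have := h.step u v hv
      by_cases ha : Ancestor p y u
      · simp only [(hiff u v hvy hv).2 ha, ha, if_true]
        linarith
      · simp only [mt (hiff u v hvy hv).1 ha, ha, if_false]
        exact this
  · intro u v hv
    by_cases hvy : v = y
    · simp only [hvy, if_true, Option.some.injEq] at hv
      subst hv
      subst hvy
      simp only [hn, hyy, if_true, if_false]
      omega
    · simp only [hvy, if_false] at hv
      have := h.rank u v hv
      by_cases ha : Ancestor p y u
      · simp only [(hiff u v hvy hv).2 ha, ha, if_true]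
        omega
      · simp only [mt (hiff u v hvy hv).1 ha, ha, if_false]
        exact this
  · intro v hv
    simp only [hv, if_true]
  · intro v hv
    simp only [hv, if_false]

/-- There is a forest whose potential has maximal sum; it satisfies the edge inequality whenever
re-attaching is possible. -/
theorem exists_maximal_forest [Fintype V] (G : SimpleGraph V) (k d : ℕ) (o : V → V → Bool) :
    ∃ p f r, ForestPotential G k d o p f r ∧
      ∀ x y, G.Adj x y → ¬ Ancestor p y x → f x + arcWeight k d o x y ≤ f y := by
  classical
  let S : Set (V → ℤ) := {f | ∃ p r, ForestPotential G k d o p f r}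
  -- The potential is determined by the parent map, and there are finitely many of these.
  have hfin : S.Finite := by
    refine (Set.finite_range (fun p : V → Option V =>
      if h : ∃ f r, ForestPotential G k d o p f r then h.choose else 0)).subset ?_
    rintro f ⟨p, r, hf⟩
    have hex : ∃ f r, ForestPotential G k d o p f r := ⟨f, r, hf⟩
    refine ⟨p, ?_⟩
    simp only [hex, dif_pos]
    obtain ⟨r', hr'⟩ := hex.choose_spec
    exact hr'.unique hf
  have hne : S.Nonempty :=
    ⟨fun _ => 0, fun _ => none, fun _ => 0, by constructor <;> simp⟩
  obtain ⟨f, ⟨p, r, hf⟩, hmax⟩ := Set.exists_max_image S (fun f => ∑ v, f v) hfin hne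
  refine ⟨p, f, r, hf, ?_⟩
  intro x y hxy hn
  by_contra! hlt
  obtain ⟨p', r', f', hf', h1, h2⟩ := hf.reattach hxy hn
  have hle := hmax f' ⟨p', r', hf'⟩
  refine absurd hle (not_le.2 (Finset.sum_lt_sum ?_ ⟨y, Finset.mem_univ _, ?_⟩))
  · intro v _
    by_cases hv : Ancestor p y v
    · rw [h1 v hv]
      linarith
    · rw [h2 v hv]
  · rw [h1 y Relation.ReflTransGen.refl]
    linarith

theorem exists_treePath {p : V → Option V} {y x : V} (hyx : Ancestor p y x) :
    ∃ (m : ℕ) (g : ℕ → V), g 0 = x ∧ g m = y ∧ ∀ i < m, p (g i) = some (g (i + 1)) := by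
  induction hyx with
  | refl => exact ⟨0, fun _ => y, rfl, rfl, by simp⟩
  | @tail u v _ hs ih =>
    obtain ⟨m, g, h0, hm, hstep⟩ := ih
    refine ⟨m + 1, fun i => Nat.casesOn i v g, rfl, hm, ?_⟩
    intro i hi
    cases i with
    | zero => simpa [h0] using hs
    | succ i => exact hstep i (by omega)

/-- The potential difference along a tree path, traversed from the lower end `g 0` to the upper
end `g m`: the weights are those of the opposite traversal, hence `-k` for each edge oriented
upwards. -/
theorem ForestPotential.diff {p : V → Option V} {f : V → ℤ} {r : V → ℕ}
    (h : ForestPotential G k d o p f r) (ho : IsOrientation G o) {m : ℕ} {g : ℕ → V}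
    (hg : ∀ i < m, p (g i) = some (g (i + 1))) :
    f (g 0) - f (g m) = d * m -
      k * (((Finset.range m).filter (fun i => o (g i) (g (i + 1)) = true)).card : ℤ) := by
  induction m with
  | zero => simp
  | succ m ih =>
    have ih := ih (fun i hi => hg i (by omega))
    have hs := h.step _ _ (hg m (by omega))
    have hor := ho _ _ (h.adj _ _ (hg m (by omega)))
    unfold arcWeight at hs
    rw [Finset.range_add_one, Finset.filter_insert]
    by_cases hc : o (g m) (g (m + 1)) = true
    · have hc' : ¬ o (g (m + 1)) (g m) = true := by
        intro h1
        rw [hor.1 h1] at hc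
        cases hc
      rw [if_neg hc'] at hs
      rw [if_pos hc, Finset.card_insert_of_notMem (by simp)]
      push_cast
      linarith
    · have hc' : o (g (m + 1)) (g m) = true := hor.2 (by simpa using hc)
      rw [if_pos hc'] at hs
      rw [if_neg hc]
      push_cast
      linarith

theorem ForestPotential.rank_path {p : V → Option V} {f : V → ℤ} {r : V → ℕ}
    (h : ForestPotential G k d o p f r) {m : ℕ} {g : ℕ → V}
    (hg : ∀ i < m, p (g i) = some (g (i + 1))) (i j : ℕ) (hij : i < j) (hj : j ≤ m) :
    r (g j) < r (g i) := by
  induction j, hij using Nat.le_induction with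
  | base => exact h.rank _ _ (hg i (by omega))
  | succ j hj' ih => exact (h.rank _ _ (hg j (by omega))).trans (ih (by omega))

/-- A tree path closed up by an edge between its ends is a cycle. -/
theorem isCycle_treePath {p : V → Option V} {f : V → ℤ} {r : V → ℕ}
    (h : ForestPotential G k d o p f r) {m : ℕ} {g : ℕ → V}
    (hg : ∀ i < m, p (g i) = some (g (i + 1))) (hadj : G.Adj (g m) (g 0)) :
    IsCycle G (m + 1) (fun i => g i.val) := by
  refine ⟨by omega, ?_, ?_⟩
  · intro i j hij
    have hij' : g i.val = g j.val := hij
    have hi := ZMod.val_lt i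
    have hj := ZMod.val_lt j
    apply ZMod.val_injective
    rcases lt_trichotomy i.val j.val with hlt | he | hlt
    · have := h.rank_path hg _ _ hlt (by omega)
      rw [hij'] at this
      omega
    · exact he
    · have := h.rank_path hg _ _ hlt (by omega)
      rw [hij'] at this
      omega
  · intro i
    have hi := ZMod.val_lt i
    by_cases him : i.val = m
    · have h0 : i + 1 = 0 := by
        rw [← ZMod.natCast_zmod_val i, him]
        exact_mod_cast ZMod.natCast_self (m + 1)
      simp only [h0, him, ZMod.val_zero]
      exact hadj
    · have h1 : (i + 1).val = i.val + 1 := by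
        rw [ZMod.val_add, ZMod.val_one_eq_one_mod, Nat.add_mod_mod]
        exact Nat.mod_eq_of_lt (by omega)
      simp only [h1]
      exact (h.adj _ _ (hg i.val (by omega))).symm

theorem plusCount_treePath (o : V → V → Bool) (m : ℕ) (g : ℕ → V) :
    plusCount o (m + 1) (fun i => g i.val) =
      ((Finset.range m).filter (fun i => o (g i) (g (i + 1)) = true)).card +
        if o (g m) (g 0) = true then 1 else 0 := by
  have hv : ∀ i, i < m + 1 → ((i : ℕ) : ZMod (m + 1)).val = i :=
    fun i hi => ZMod.val_natCast_of_lt hi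
  have hlast : ((m : ℕ) : ZMod (m + 1)) + 1 = 0 := by
    exact_mod_cast ZMod.natCast_self (m + 1)
  have hrest : (Finset.range m).filter
      (fun i : ℕ => o (g ((i : ZMod (m + 1))).val) (g ((i : ZMod (m + 1)) + 1).val) = true) =
      (Finset.range m).filter (fun i => o (g i) (g (i + 1)) = true) := by
    apply Finset.filter_congr
    intro i hi
    have hi' := Finset.mem_range.1 hi
    have h1 : ((i : ZMod (m + 1)) + 1).val = i + 1 := by
      have := hv (i + 1) (by omega)
      push_cast at this
      exact this
    rw [hv i (by omega), h1]
  unfold plusCount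
  rw [Finset.range_add_one, Finset.filter_insert, hrest]
  simp only [hlast, hv m (by omega), ZMod.val_zero]
  split_ifs
  · rw [Finset.card_insert_of_notMem (by simp)]
  · rfl

/-- An edge between a vertex `x` and its ancestor `y` is properly colored modulo `k`, provided the
inequality from `y` to `x` holds. -/
theorem edge_of_ancestor (hd : 1 ≤ d) (hk : 2 * d ≤ k) (ho : IsOrientation G o)
    (h : ∀ (n : ℕ) (f : ZMod n → V), IsCycle G n f →
      1 ≤ (d * n) % k → (d * n) % k ≤ 2 * d - 1 → TauLe o n f ((k : ℝ) / (d : ℝ)))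
    {p : V → Option V} {f : V → ℤ} {r : V → ℕ} (hf : ForestPotential G k d o p f r)
    {x y : V} (hyx : Ancestor p y x) (hadj : G.Adj y x)
    (hmax : f y + arcWeight k d o y x ≤ f x) :
    (d : ℤ) ≤ (f x - f y) % k ∧ (f x - f y) % k ≤ k - d := by
  obtain ⟨m, g, rfl, rfl, hg⟩ := exists_treePath hyx
  have hdiff := hf.diff ho hg
  have hcyc := isCycle_treePath hf hg hadj
  have hP := plusCount_treePath o m g
  set a := ((Finset.range m).filter (fun i => o (g i) (g (i + 1)) = true)).card with ha
  by_cases hc : 1 ≤ (d * (m + 1)) % k ∧ (d * (m + 1)) % k ≤ 2 * d - 1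
  · obtain ⟨_, _, ht, _⟩ := h _ _ hcyc hc.1 hc.2
    have hd0 : (0 : ℝ) < d := by exact_mod_cast hd
    rw [div_mul_eq_mul_div, le_div_iff₀ hd0, hP] at ht
    have ht' : (m + 1) * d ≤ k * (a + if o (g m) (g 0) = true then 1 else 0) := by
      exact_mod_cast ht
    unfold arcWeight at hmax
    zify at ht'
    by_cases hor : o (g m) (g 0) = true
    · rw [if_pos hor] at hmax ht'
      rw [Int.emod_eq_of_lt (by linarith) (by nlinarith)]
      constructor <;> nlinarith
    · rw [if_neg hor] at ht' hmax
      -- The difference lies in `[d - k, -d]`, so its residue is obtained by adding `k`.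
      have hu : f (g 0) - f (g m) ≤ -d := by
        nlinarith
      rw [← Int.add_emod_right, Int.emod_eq_of_lt (by linarith) (by omega)]
      constructor <;> linarith
  · -- The residue `t` of `d * (m + 1)` is `0` or at least `2d`, and the difference is `t - d`
    -- modulo `k`.
    have hkpos : 0 < k := by omega
    have hq := Nat.div_add_mod (d * (m + 1)) k
    have htk := Nat.mod_lt (d * (m + 1)) hkpos
    generalize (d * (m + 1)) % k = t at hc hq htk
    generalize (d * (m + 1)) / k = q at hq
    have hq' : (k : ℤ) * q + t = d * (m + 1) := by exact_mod_cast hq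
    have he : f (g 0) - f (g m) = (t - d) + k * ((q : ℤ) - a) := by
      rw [hdiff]
      linarith
    rw [he, Int.add_mul_emod_self_left]
    rcases Nat.eq_zero_or_pos t with h0 | h0
    · subst h0
      rw [← Int.add_emod_right, Int.emod_eq_of_lt (by push_cast; omega) (by push_cast; omega)]
      push_cast
      constructor <;> omega
    · rw [Int.emod_eq_of_lt (by omega) (by omega)]
      constructor <;> omega

/-- Integers whose difference has residue in `[d, k - d]` have residues at admissible distance. -/
theorem abs_emod_sub_emod (hd : 1 ≤ d) (hk : 2 * d ≤ k) (a b : ℤ)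
    (h1 : (d : ℤ) ≤ (a - b) % k) (h2 : (a - b) % k ≤ k - d) :
    (d : ℤ) ≤ |a % k - b % k| ∧ |a % k - b % k| ≤ k - d := by
  have hk0 : (0 : ℤ) < k := by omega
  have ha := Int.emod_nonneg a hk0.ne'
  have hb := Int.emod_nonneg b hk0.ne'
  have ha' := Int.emod_lt_of_pos a hk0
  have hb' := Int.emod_lt_of_pos b hk0
  rw [Int.sub_emod] at h1 h2
  generalize a % (k : ℤ) = s at *
  generalize b % (k : ℤ) = t at *
  rcases le_total t s with hst | hst
  · rw [Int.emod_eq_of_lt (by omega) (by omega)] at h1 h2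
    rw [abs_of_nonneg (by omega)]
    exact ⟨h1, h2⟩
  · rcases hst.eq_or_lt with he | hlt
    · subst he
      simp at h1
      omega
    · rw [← Int.add_emod_right, Int.emod_eq_of_lt (by omega) (by omega)] at h1 h2
      rw [abs_of_nonpos (by omega)]
      constructor <;> omega

end

/-- **Corollary 3 (Zhu).** Let `k ≥ 2d ≥ 1` be integers. If `G` has an orientation
`ω` with `τ(C, ω) ≤ k/d` for every cycle `C` satisfying
`1 ≤ d·|C| (mod k) ≤ 2d - 1`, then `G` has a `(k,d)`-coloring. -/
theorem kd_coloring_of_orientation {V : Type*} [Fintype V]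
    (G : SimpleGraph V) (k d : ℕ) (hd : 1 ≤ d) (hk : 2 * d ≤ k)
    (o : V → V → Bool) (ho : IsOrientation G o)
    (h : ∀ (n : ℕ) (f : ZMod n → V), IsCycle G n f →
      1 ≤ (d * n) % k → (d * n) % k ≤ 2 * d - 1 → TauLe o n f ((k : ℝ) / (d : ℝ))) :
    ∃ φ : V → ℤ, IsKDColoring G k d φ := by
  obtain ⟨p, f, r, hf, hmax⟩ := exists_maximal_forest G k d o
  have hk0 : (0 : ℤ) < k := by omega
  refine ⟨fun v => f v % k, fun v => ⟨Int.emod_nonneg _ hk0.ne', Int.emod_lt_of_pos _ hk0⟩, ?_⟩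
  intro x y hxy
  by_cases hyx : Ancestor p y x
  · have hn : ¬ Ancestor p x y := fun ha => hxy.ne (hf.antisymm hyx ha)
    obtain ⟨h1, h2⟩ := edge_of_ancestor hd hk ho h hf hyx hxy.symm (hmax y x hxy.symm hn)
    exact abs_emod_sub_emod hd hk _ _ h1 h2
  · by_cases hxy' : Ancestor p x y
    · obtain ⟨h1, h2⟩ := edge_of_ancestor hd hk ho h hf hxy' hxy (hmax x y hxy hyx)
      have := abs_emod_sub_emod hd hk _ _ h1 h2
      rwa [abs_sub_comm] at this
    · have e1 := hmax x y hxy hyx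
      have e2 := hmax y x hxy.symm hxy'
      have hor := ho x y hxy
      unfold arcWeight at e1 e2
      by_cases hc : o x y = true
      · rw [if_pos hc] at e1
        rw [if_neg (by simp [hor.1 hc])] at e2
        have : (d : ℤ) ≤ (f y - f x) % k ∧ (f y - f x) % k ≤ k - d := by
          rw [Int.emod_eq_of_lt (by omega) (by omega)]
          constructor <;> omega
        have := abs_emod_sub_emod hd hk _ _ this.1 this.2
        rwa [abs_sub_comm] at this
      · have hc' : o y x = true := (ho y x hxy.symm).2 (by simpa using hc)
        rw [if_neg hc] at e1
        rw [if_pos hc'] at e2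
        have : (d : ℤ) ≤ (f x - f y) % k ∧ (f x - f y) % k ≤ k - d := by
          rw [Int.emod_eq_of_lt (by omega) (by omega)]
          constructor <;> omega
        exact abs_emod_sub_emod hd hk _ _ this.1 this.2
end

section
/- Let G be a finite simple graph and let r be a real number with r ≥ 2. If every cycle C of G satisfies |C| (mod r) ∉ (0,2), then G has a circular r-coloring. -/
/-- A rooted spanning forest of `G`, given by the depth `d` and the parent `p` of each vertex. Roots
are the vertices of depth `0`, where the value of `p` is irrelevant. -/
def IsRootedForest {V : Type*} (G : SimpleGraph V) (d : V → ℕ) (p : V → V) : Prop :=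
  ∀ v, 0 < d v → G.Adj v (p v) ∧ d (p v) + 1 = d v

namespace IsRootedForest

variable {V : Type*} {G : SimpleGraph V} {d : V → ℕ} {p : V → V}

lemma depth_iterate (hF : IsRootedForest G d p) (v : V) (i : ℕ) (hi : i ≤ d v) :
    d (p^[i] v) + i = d v := by
  induction i with
  | zero => simp
  | succ i ih =>
    have h1 := ih (by omega)
    have h2 := (hF (p^[i] v) (by omega)).2
    rw [Function.iterate_succ_apply']
    omega

lemma depth_lt_card [Fintype V] (hF : IsRootedForest G d p) (v : V) :
    d v < Fintype.card V := by
  have hinj : Function.Injective (fun i : Fin (d v + 1) => p^[i.val] v) := by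
    intro i j hij
    have hi := hF.depth_iterate v i (by omega)
    have hj := hF.depth_iterate v j (by omega)
    have : d (p^[i.val] v) = d (p^[j.val] v) := congrArg d hij
    exact Fin.ext (by omega)
  have := Fintype.card_le_of_injective _ hinj
  simp only [Fintype.card_fin] at this
  omega

/-- If the edge `u v` violates the depth-first search property, hanging the subtree of `u` below `v`
gives a forest with a larger sum of depths. -/
lemma exists_sum_lt [Fintype V] (hF : IsRootedForest G d p) {u v : V} (huv : G.Adj u v)
    (hd : d u ≤ d v) (hne : p^[d v - d u] v ≠ u) :
    ∃ dNew pNew, IsRootedForest G dNew pNew ∧ ∑ w, d w < ∑ w, dNew w := by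
  classical
  -- `D w` says that `w` lies in the subtree of `u`.
  let D : V → Prop := fun w => ∃ i, i ≤ d w ∧ p^[i] w = u
  have hDu : D u := ⟨0, by omega, rfl⟩
  have hDv : ¬ D v := by
    rintro ⟨i, hi, hiu⟩
    have h1 := hF.depth_iterate v i hi
    rw [hiu] at h1
    apply hne
    rw [show d v - d u = i by omega, hiu]
  have hDp : ∀ w, w ≠ u → 0 < d w → (D (p w) ↔ D w) := by
    intro w hw hw0
    have h2 := (hF w hw0).2
    constructor
    · rintro ⟨i, hi, hiu⟩
      exact ⟨i + 1, by omega, by rwa [Function.iterate_succ_apply]⟩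
    · rintro ⟨i, hi, hiu⟩
      cases i with
      | zero => exact absurd hiu hw
      | succ i => exact ⟨i, by omega, by rwa [Function.iterate_succ_apply] at hiu⟩
  refine ⟨fun w => if D w then d w + (d v + 1 - d u) else d w,
    fun w => if w = u then v else p w, ?_, ?_⟩
  · intro w hw
    by_cases hwu : w = u
    · subst hwu
      simp only [if_true, hDu, hDv, if_false]
      exact ⟨huv, by omega⟩
    · have hw0 : 0 < d w := by
        by_contra h0
        have hDw : ¬ D w := by
          rintro ⟨i, hi, hiu⟩
          obtain rfl : i = 0 := by omega
          exact hwu hiu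
        simp only [hDw, if_false] at hw
        exact h0 hw
      obtain ⟨h1, h2⟩ := hF w hw0
      simp only [hwu, if_false, hDp w hwu hw0]
      refine ⟨h1, ?_⟩
      split_ifs <;> omega
  · apply Finset.sum_lt_sum
    · intro w _
      split_ifs <;> omega
    · exact ⟨u, Finset.mem_univ _, by simp only [hDu, if_true]; omega⟩

end IsRootedForest

/-- Every finite graph has a depth-first search forest: the deeper end of each edge is a
descendant of the other end. -/
lemma exists_normalForest {V : Type*} [Fintype V] (G : SimpleGraph V) :
    ∃ d p, IsRootedForest G d p ∧
      ∀ u v, G.Adj u v → d u ≤ d v → p^[d v - d u] v = u := by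
  let S : Set ℕ := {n | ∃ d p, IsRootedForest G d p ∧ ∑ w, d w = n}
  have hne : S.Nonempty :=
    ⟨_, fun _ => 0, id, fun v hv => absurd hv (lt_irrefl 0), rfl⟩
  have hbdd : BddAbove S := by
    refine ⟨∑ _w : V, Fintype.card V, ?_⟩
    rintro n ⟨d, p, hF, rfl⟩
    exact Finset.sum_le_sum fun w _ => (hF.depth_lt_card w).le
  obtain ⟨d, p, hF, hsum⟩ := Nat.sSup_mem hne hbdd
  refine ⟨d, p, hF, fun u v huv hd => ?_⟩
  by_contra hcon
  obtain ⟨dNew, pNew, hFNew, hlt⟩ := hF.exists_sum_lt huv hd hcon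
  have := le_csSup hbdd (show ∑ w, dNew w ∈ S from ⟨dNew, pNew, hFNew, rfl⟩)
  omega

/-- The fundamental cycle of an edge `u v` whose end `u` is an ancestor of `v`. -/
lemma IsRootedForest.isCycle {V : Type*} {G : SimpleGraph V} {d : V → ℕ} {p : V → V}
    (hF : IsRootedForest G d p) {u v : V} (huv : G.Adj u v) (hanc : p^[d v - d u] v = u) :
    IsCycle G (d v - d u + 1) (fun i => p^[i.val] v) := by
  refine ⟨by omega, ?_, ?_⟩
  · intro i j hij
    have hiLt := ZMod.val_lt i
    have hjLt := ZMod.val_lt j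
    have hi := hF.depth_iterate v i.val (by omega)
    have hj := hF.depth_iterate v j.val (by omega)
    have : d (p^[i.val] v) = d (p^[j.val] v) := congrArg d hij
    exact ZMod.val_injective _ (by omega)
  · intro i
    have hiLt := ZMod.val_lt i
    by_cases hi : i.val = d v - d u
    · have h0 : i + 1 = 0 := by
        rw [← ZMod.natCast_zmod_val i, hi]
        exact_mod_cast ZMod.natCast_self (d v - d u + 1)
      simp only [h0, hi, hanc, ZMod.val_zero, Function.iterate_zero, id]
      exact huv
    · have h1 : (i + 1).val = i.val + 1 := by
        have : i + 1 = ((i.val + 1 : ℕ) : ZMod (d v - d u + 1)) := by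
          push_cast
          rw [ZMod.natCast_zmod_val]
        rw [this, ZMod.val_natCast_of_lt (by omega)]
      have hdi := hF.depth_iterate v i.val (by omega)
      simp only [h1, Function.iterate_succ_apply']
      exact (hF _ (by omega)).1

/-- If `y - x + 1` modulo `r` avoids `(0, 2)`, the residues of `x` and `y` are at circular distance
at least `1`. -/
lemma abs_rmod_sub_rmod {r x y : ℝ} (hr : 2 ≤ r)
    (h : rmod (y - x + 1) r ∉ Set.Ioo (0 : ℝ) 2) :
    1 ≤ |rmod x r - rmod y r| ∧ |rmod x r - rmod y r| ≤ r - 1 := by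
  have hr0 : 0 < r := by linarith
  have hx0 := rmod_nonneg hr0 x
  have hx1 := rmod_lt hr0 x
  have hy0 := rmod_nonneg hr0 y
  have hy1 := rmod_lt hr0 y
  have ht0 := rmod_nonneg hr0 (y - x + 1)
  have ht1 := rmod_lt hr0 (y - x + 1)
  obtain ⟨q, hq⟩ : ∃ q : ℤ, rmod y r - rmod x r = rmod (y - x + 1) r - 1 + r * q := by
    refine ⟨⌊(y - x + 1) / r⌋ - ⌊y / r⌋ + ⌊x / r⌋, ?_⟩
    unfold rmod
    push_cast
    ring
  rw [abs_sub_comm]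
  have hz1 : rmod y r - rmod x r < r := by linarith
  have hz0 : -r < rmod y r - rmod x r := by linarith
  generalize rmod (y - x + 1) r = t at *
  generalize rmod y r - rmod x r = z at *
  have hq1 : q ≤ 1 := by
    by_contra hcon
    have : (2 : ℝ) ≤ q := by exact_mod_cast (by omega : 2 ≤ q)
    nlinarith
  have hq0 : -1 ≤ q := by
    by_contra hcon
    have : (q : ℝ) ≤ -2 := by exact_mod_cast (by omega : q ≤ -2)
    nlinarith
  have ht : t = 0 ∨ 2 ≤ t := by
    by_contra! hcon
    exact h ⟨lt_of_le_of_ne ht0 (Ne.symm hcon.1), hcon.2⟩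
  have hz : (1 ≤ z ∧ z ≤ r - 1) ∨ (1 ≤ -z ∧ -z ≤ r - 1) := by
    obtain rfl | rfl | rfl : q = -1 ∨ q = 0 ∨ q = 1 := by omega
    all_goals push_cast at hq
    · rcases ht with ht | ht
      · linarith
      · exact Or.inr ⟨by linarith, by linarith⟩
    · rcases ht with ht | ht
      · exact Or.inr ⟨by linarith, by linarith⟩
      · exact Or.inl ⟨by linarith, by linarith⟩
    · rcases ht with ht | ht
      · exact Or.inl ⟨by linarith, by linarith⟩
      · linarith
  rcases hz with hz | hz
  · rwa [abs_of_nonneg (by linarith)]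
  · rwa [abs_of_nonpos (by linarith)]

/-- **Corollary 4.** Let `r ≥ 2` be real. If every cycle `C` of `G` satisfies
`|C| (mod r) ∉ (0, 2)`, then `G` has a circular `r`-coloring. -/
theorem circular_coloring_of_cycle_lengths {V : Type*} [Fintype V]
    (G : SimpleGraph V) (r : ℝ) (hr : 2 ≤ r)
    (h : ∀ (n : ℕ) (f : ZMod n → V), IsCycle G n f →
      rmod (n : ℝ) r ∉ Set.Ioo (0 : ℝ) 2) :
    ∃ φ : V → ℝ, IsCircGraphColoring G r φ := by
  obtain ⟨d, p, hF, hN⟩ := exists_normalForest G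
  have hr0 : 0 < r := by linarith
  have key : ∀ u v, G.Adj u v → d u ≤ d v →
      1 ≤ |rmod (d u) r - rmod (d v) r| ∧ |rmod (d u) r - rmod (d v) r| ≤ r - 1 := by
    intro u v huv hd
    have hc := h _ _ (hF.isCycle huv (hN u v huv hd))
    push_cast [Nat.cast_sub hd] at hc
    exact abs_rmod_sub_rmod hr hc
  refine ⟨fun v => rmod (d v) r, fun v => ⟨rmod_nonneg hr0 _, rmod_lt hr0 _⟩, fun u v huv => ?_⟩
  rcases le_total (d u) (d v) with hd | hd
  · exact key u v huv hd
  · rw [abs_sub_comm]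
    exact key v u huv.symm hd
end

section
/- Let G be a finite simple graph and let k ≥ 2 be an integer. If G has an orientation ω such that τ(C,ω) ≤ k for every cycle C of G with |C| ≡ 1 (mod k), then G has a proper k-coloring (equivalently, a (k,1)-coloring). -/
/-- Weight of the step from `u` to `v`: `1 - k` against the arc `v → u`, and `1` otherwise. -/
def stepWt {V : Type*} (k : ℕ) (o : V → V → Bool) (u v : V) : ℤ :=
  if o v u = true then 1 - k else 1

/-- Weight of a path given as the list of its vertices from the end back to the start. -/
def pathWt {V : Type*} (k : ℕ) (o : V → V → Bool) : List V → ℤ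
  | [] => 0
  | [_] => 0
  | a :: b :: l => stepWt k o b a + pathWt k o (b :: l)

lemma pathWt_append {V : Type*} (k : ℕ) (o : V → V → Bool) (A B : List V) (y : V) :
    pathWt k o (A ++ y :: B) = pathWt k o (A ++ [y]) + pathWt k o (y :: B) := by
  induction A with
  | nil => simp [pathWt]
  | cons a A ih =>
    cases A with
    | nil => simp [pathWt]
    | cons b A =>
      simp only [List.cons_append, pathWt] at ih ⊢
      rw [ih]; ring

lemma pathWt_modEq {V : Type*} (k : ℕ) (o : V → V → Bool) (a : V) (l : List V) :
    (k : ℤ) ∣ pathWt k o (a :: l) - l.length := by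
  induction l generalizing a with
  | nil => simp [pathWt]
  | cons b l ih =>
    have h1 : (k : ℤ) ∣ stepWt k o b a - 1 := by
      unfold stepWt; split_ifs <;> simp
    have := dvd_add h1 (ih b)
    simp only [pathWt, List.length_cons]
    have e : stepWt k o b a + pathWt k o (b :: l) - ((l.length + 1 : ℕ) : ℤ)
        = stepWt k o b a - 1 + (pathWt k o (b :: l) - l.length) := by
      push_cast; ring
    rwa [e]

lemma pathWt_eq_sum {V : Type*} (k : ℕ) (o : V → V → Bool) (d a : V) (l : List V) :
    pathWt k o (a :: l) = ∑ i ∈ Finset.range l.length,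
      stepWt k o ((a :: l).getD (i + 1) d) ((a :: l).getD i d) := by
  induction l generalizing a with
  | nil => simp [pathWt]
  | cons b l ih =>
    rw [List.length_cons, Finset.sum_range_succ', pathWt, ih b]
    rw [add_comm]
    simp

/-- The bound on `τ`, applied to the cycle with vertex list `x :: l`, says that the closed walk
tracing the list backwards has nonpositive weight. -/
lemma closed_weight_nonpos {V : Type*} (G : SimpleGraph V) (k : ℕ) (o : V → V → Bool)
    (h : ∀ (n : ℕ) (f : ZMod n → V), IsCycle G n f → n % k = 1 → TauLe o n f (k : ℝ))
    (x y : V) (l : List V) (hnd : (x :: l).Nodup) (hch : (x :: l).IsChain G.Adj)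
    (hy : (x :: l).getD l.length x = y) (hadj : G.Adj y x) (hmod : (l.length + 1) % k = 1) :
    pathWt k o (x :: l) + stepWt k o x y ≤ 0 := by
  set L := x :: l with hL
  have hlen : L.length = l.length + 1 := by simp [hL]
  set f : ZMod (l.length + 1) → V := fun i => L.getD i.val x with hf
  have hval : ∀ i : ℕ, i < l.length + 1 → f (i : ZMod (l.length + 1)) = L.getD i x := by
    intro i hi
    simp only [hf, ZMod.val_natCast, Nat.mod_eq_of_lt hi]
  have hval1 : ∀ i : ℕ, i < l.length →
      f ((i : ZMod (l.length + 1)) + 1) = L.getD (i + 1) x := by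
    intro i hi
    rw [← hval (i + 1) (by omega)]; push_cast; rfl
  have hlast : f ((l.length : ZMod (l.length + 1)) + 1) = x := by
    have : ((l.length : ZMod (l.length + 1)) + 1) = ((0 : ℕ) : ZMod (l.length + 1)) := by
      have := ZMod.natCast_self (l.length + 1)
      push_cast at this ⊢
      exact this
    rw [this, hval 0 (by omega)]; simp [hL]
  have hcyc : IsCycle G (l.length + 1) f := by
    refine ⟨by omega, ?_, ?_⟩
    · intro i j hij
      have hi := ZMod.val_lt i
      have hj := ZMod.val_lt j
      simp only [hf] at hij
      rw [List.getD_eq_getElem _ _ (by omega), List.getD_eq_getElem _ _ (by omega)] at hij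
      exact ZMod.val_injective _ ((hnd.getElem_inj_iff).1 hij)
    · intro i
      have hi := ZMod.val_lt i
      rw [← ZMod.natCast_zmod_val i]
      rcases Nat.lt_succ_iff_lt_or_eq.1 hi with h1 | h1
      · rw [hval _ hi, hval1 _ h1, List.getD_eq_getElem _ _ (by omega),
          List.getD_eq_getElem _ _ (by omega)]
        exact List.isChain_iff_getElem.1 hch _ (by omega)
      · rw [h1, hlast, hval _ (by omega), hy]; exact hadj
  obtain ⟨-, -, h3, -⟩ := h _ f hcyc hmod
  have h3' : ((l.length + 1 : ℕ) : ℤ) ≤ k * plusCount o (l.length + 1) f := by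
    exact_mod_cast h3
  have hsum : ∑ i ∈ Finset.range (l.length + 1), stepWt k o
      (f ((i : ZMod (l.length + 1)) + 1)) (f (i : ZMod (l.length + 1)))
      = ((l.length + 1 : ℕ) : ℤ) - k * plusCount o (l.length + 1) f := by
    have : ∀ u v, stepWt k o u v = 1 - k * (if o v u = true then 1 else 0) := by
      intro u v; unfold stepWt; split_ifs <;> simp
    simp only [this, Finset.sum_sub_distrib, ← Finset.mul_sum, plusCount, Finset.sum_boole]
    simp
  rw [Finset.sum_range_succ, hlast, hval _ (by omega), hy] at hsum
  rw [hL, pathWt_eq_sum k o x]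
  have : ∑ i ∈ Finset.range l.length, stepWt k o
      (f ((i : ZMod (l.length + 1)) + 1)) (f (i : ZMod (l.length + 1)))
      = ∑ i ∈ Finset.range l.length, stepWt k o (L.getD (i + 1) x) (L.getD i x) := by
    refine Finset.sum_congr rfl fun i hi => ?_
    have := Finset.mem_range.1 hi
    rw [hval _ (by omega), hval1 _ this]
  rw [this] at hsum
  linarith

/-- A rooted spanning forest of `G`, encoded by the list `P v` of vertices on the path from each
vertex `v` to its root (`v` first). -/
structure RootedForest {V : Type*} (G : SimpleGraph V) (P : V → List V) : Prop where
  head : ∀ v, ∃ t, P v = v :: t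
  nodup : ∀ v, (P v).Nodup
  chain : ∀ v, (P v).IsChain G.Adj
  suffix : ∀ v, ∀ u ∈ P v, P u <:+ P v

lemma RootedForest.self_mem {V : Type*} {G : SimpleGraph V} {P : V → List V}
    (hP : RootedForest G P) (v : V) : v ∈ P v := by
  obtain ⟨t, ht⟩ := hP.head v
  simp [ht]

/-- If `y` is not an ancestor of `x`, making `x` the parent of `y` yields a forest; when
this improves the weight of the path to `y`, the total weight increases. -/
lemma RootedForest.graft {V : Type*} [Fintype V] {G : SimpleGraph V} {P : V → List V}
    (hP : RootedForest G P) (k : ℕ) (o : V → V → Bool) {x y : V} (hadj : G.Adj y x)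
    (hyx : y ∉ P x) (hlt : pathWt k o (P y) < pathWt k o (P x) + stepWt k o x y) :
    ∃ Q, RootedForest G Q ∧ ∑ v, pathWt k o (P v) < ∑ v, pathWt k o (Q v) := by
  classical
  have hA : ∀ z, ∃ A, y ∈ P z → A ++ P y = P z := by
    intro z
    by_cases hz : y ∈ P z
    · obtain ⟨A, hA⟩ := hP.suffix z y hz
      exact ⟨A, fun _ => hA⟩
    · exact ⟨[], fun h => absurd h hz⟩
  choose A hA using hA
  obtain ⟨t, ht⟩ := hP.head y
  obtain ⟨s, hs⟩ := hP.head x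
  have hAy : A y = [] := by
    simpa using hA y (hP.self_mem y)
  have hanc : ∀ {u z w}, u ∈ P z → w ∈ P u → w ∈ P z := fun hu hw =>
    (hP.suffix _ _ hu).subset hw
  let Q : V → List V := fun z => if y ∈ P z then A z ++ y :: P x else P z
  have hQ1 : ∀ z, y ∈ P z → Q z = A z ++ y :: P x := fun z hz => if_pos hz
  have hQ2 : ∀ z, y ∉ P z → Q z = P z := fun z hz => if_neg hz
  -- The vertices strictly below `y` on a path are descendants of `y`.
  have hbelow : ∀ z, y ∈ P z → ∀ u ∈ A z, y ∈ P u ∧ A u <:+ A z := by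
    intro z hz u hu
    have hzA := hA z hz
    have huz : u ∈ P z := by rw [← hzA]; simp [hu]
    have hnd := hP.nodup z
    rw [← hzA] at hnd
    have hyu : P y <:+ P u := by
      rcases List.suffix_or_suffix_of_suffix (hP.suffix z u huz) (hP.suffix z y hz) with h1 | h1
      · exact absurd (h1.subset (hP.self_mem u)) (List.disjoint_of_nodup_append hnd hu)
      · exact h1
    have hyu' : y ∈ P u := hyu.subset (hP.self_mem y)
    refine ⟨hyu', ?_⟩
    obtain ⟨B, hB⟩ := hP.suffix z u huz
    refine ⟨B, ?_⟩
    rw [← hA u hyu', ← hzA, ← List.append_assoc] at hB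
    exact List.append_cancel_right hB
  have hwt : ∀ z, y ∈ P z → pathWt k o (P z) < pathWt k o (Q z) := by
    intro z hz
    rw [hQ1 z hz, ← hA z hz, pathWt_append]
    rw [ht] at hlt ⊢
    rw [pathWt_append, hs, pathWt, ← hs]
    linarith
  refine ⟨Q, ⟨?_, ?_, ?_, ?_⟩, ?_⟩
  · intro z
    by_cases hz : y ∈ P z
    · rw [hQ1 z hz]
      have h1 := hA z hz
      obtain ⟨r, hr⟩ := hP.head z
      rw [hr, ht] at h1
      cases hAz : A z with
      | nil => rw [hAz] at h1; simp at h1; exact ⟨P x, by simp [h1.1]⟩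
      | cons b B => rw [hAz] at h1; simp at h1; exact ⟨B ++ y :: P x, by simp [h1.1]⟩
    · rw [hQ2 z hz]; exact hP.head z
  · intro z
    by_cases hz : y ∈ P z
    · rw [hQ1 z hz]
      have hnd := hP.nodup z
      rw [← hA z hz] at hnd
      refine List.nodup_append'.2 ⟨hnd.of_append_left, List.nodup_cons.2 ⟨hyx, hP.nodup x⟩, ?_⟩
      intro u hu hu'
      rcases List.mem_cons.1 hu' with rfl | hu'
      · exact List.disjoint_of_nodup_append hnd hu (hP.self_mem u)
      · exact hyx (hanc hu' (hbelow z hz u hu).1)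
    · rw [hQ2 z hz]; exact hP.nodup z
  · intro z
    by_cases hz : y ∈ P z
    · rw [hQ1 z hz]
      have hc := hP.chain z
      rw [← hA z hz, ht] at hc
      refine List.isChain_split.2 ⟨(List.isChain_split.1 hc).1, ?_⟩
      have hx := hP.chain x
      rw [hs] at hx ⊢
      exact List.isChain_cons_cons.2 ⟨hadj, hx⟩
    · rw [hQ2 z hz]; exact hP.chain z
  · intro z u hu
    by_cases hz : y ∈ P z
    · rw [hQ1 z hz] at hu ⊢
      rcases List.mem_append.1 hu with hu | hu
      · obtain ⟨h1, B, h2⟩ := hbelow z hz u hu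
        rw [hQ1 u h1]
        exact ⟨B, by rw [← List.append_assoc, h2]⟩
      · rcases List.mem_cons.1 hu with rfl | hu
        · rw [hQ1 u (hP.self_mem u), hAy]
          exact List.suffix_append _ _
        · rw [hQ2 u (fun h1 => hyx (hanc hu h1))]
          exact (hP.suffix x u hu).trans
            ((List.suffix_cons y (P x)).trans (List.suffix_append _ _))
    · rw [hQ2 z hz] at hu ⊢
      rw [hQ2 u (fun h1 => hz (hanc hu h1))]
      exact hP.suffix z u hu
  · refine Finset.sum_lt_sum (fun z _ => ?_) ⟨y, Finset.mem_univ _, hwt y (hP.self_mem y)⟩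
    by_cases hz : y ∈ P z
    · exact (hwt z hz).le
    · rw [hQ2 z hz]

lemma exists_max_forest {V : Type*} [Fintype V] (G : SimpleGraph V) (k : ℕ)
    (o : V → V → Bool) :
    ∃ P, RootedForest G P ∧ ∀ Q, RootedForest G Q →
      ∑ v, pathWt k o (Q v) ≤ ∑ v, pathWt k o (P v) := by
  classical
  have hfin : {P : V → List V | RootedForest G P}.Finite := by
    have h1 : {l : List V | l.Nodup}.Finite :=
      Set.finite_coe_iff.1 (inferInstanceAs (Finite {l : List V // l.Nodup}))
    exact (Set.Finite.pi' fun _ : V => h1).subset fun P hP v => hP.nodup v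
  -- The edgeless forest, in which every vertex is a root.
  have hne : {P : V → List V | RootedForest G P}.Nonempty :=
    ⟨fun v => [v], fun v => ⟨[], rfl⟩, fun v => by simp, fun v => by simp,
      fun v u hu => by simp at hu; simp [hu]⟩
  exact Set.exists_max_image _ (fun P => ∑ v, pathWt k o (P v)) hfin hne

/-- **Tuza's theorem.** Let `k ≥ 2` be an integer. If `G` has an orientation `ω`
with `τ(C, ω) ≤ k` for every cycle `C` with `|C| ≡ 1 (mod k)`, then `G` has a
proper `k`-coloring. -/
theorem colorable_of_orientation {V : Type*} [Fintype V]
    (G : SimpleGraph V) (k : ℕ) (hk : 2 ≤ k)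
    (o : V → V → Bool) (ho : IsOrientation G o)
    (h : ∀ (n : ℕ) (f : ZMod n → V), IsCycle G n f →
      n % k = 1 → TauLe o n f (k : ℝ)) :
    G.Colorable k := by
  classical
  obtain ⟨P, hP, hmax⟩ := exists_max_forest G k o
  have key : ∀ x y, G.Adj y x → (k : ℤ) ∣ pathWt k o (P x) - pathWt k o (P y) →
      pathWt k o (P x) + stepWt k o x y ≤ pathWt k o (P y) := by
    intro x y hadj hdvd
    by_contra! hlt
    by_cases hyx : y ∈ P x
    · obtain ⟨A, hA⟩ := hP.suffix x y hyx
      obtain ⟨t, ht⟩ := hP.head y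
      obtain ⟨s, hs⟩ := hP.head x
      have hnd := hP.nodup x
      have hch := hP.chain x
      have hw := pathWt_append k o A t y
      rw [← ht, hA] at hw
      -- `A ++ [y]` is the forest path from `x` to `y`; it starts with `x`.
      obtain ⟨l, hl⟩ : ∃ l, A ++ [y] = x :: l := by
        rw [ht, hs] at hA
        cases A with
        | nil => simp at hA; exact ⟨[], by simp [hA.1]⟩
        | cons b B => simp at hA; exact ⟨B ++ [y], by simp [hA.1]⟩
      rw [← hA, ht] at hnd hch
      have hlenA : A.length = l.length := by
        have := congrArg List.length hl
        simpa using this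
      have hd := pathWt_modEq k o x l
      rw [hl] at hw
      have hdl : (k : ℤ) ∣ l.length := by
        have := dvd_sub hdvd hd
        have e : pathWt k o (P x) - pathWt k o (P y) - (pathWt k o (x :: l) - l.length)
            = l.length := by
          rw [hw]; ring
        rwa [e] at this
      have hdl' : k ∣ l.length := by exact_mod_cast hdl
      have := closed_weight_nonpos G k o h x y l
        (by
          rw [← hl]
          refine hnd.sublist ?_
          simp)
        (by rw [← hl]; exact (List.isChain_split.1 hch).1)
        (by rw [← hl, ← hlenA]; simp)
        hadj
        (by
          obtain ⟨c, hc⟩ := hdl'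
          rw [hc, Nat.mul_add_mod]
          exact Nat.mod_eq_of_lt (by omega))
      linarith
    · obtain ⟨Q, hQ, hbig⟩ := hP.graft k o hadj hyx hlt
      exact absurd (hmax Q hQ) (not_le.2 hbig)
  have arc : ∀ x y, G.Adj x y → o x y = true →
      ¬ (k : ℤ) ∣ pathWt k o (P x) - pathWt k o (P y) := by
    intro x y hadj hxy hdvd
    have h1 := key x y hadj.symm hdvd
    have h2 := key y x hadj (by rw [← neg_sub]; exact hdvd.neg_right)
    have hyx : o y x = false := (ho x y hadj).1 hxy
    simp only [stepWt, hxy, hyx] at h1 h2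
    simp at h1 h2
    obtain ⟨c, hc⟩ := hdvd
    have hk' : (2 : ℤ) ≤ k := by exact_mod_cast hk
    have hc0 : c < 0 := by by_contra! hc0; nlinarith
    nlinarith
  have : NeZero k := ⟨by omega⟩
  have hcol : G.Coloring (ZMod k) := SimpleGraph.Coloring.mk
    (fun v => ((pathWt k o (P v) : ℤ) : ZMod k)) (by
      intro x y hadj heq
      have hd : (k : ℤ) ∣ pathWt k o (P x) - pathWt k o (P y) := by
        rw [← ZMod.intCast_zmod_eq_zero_iff_dvd]
        push_cast
        exact sub_eq_zero.2 heq
      cases hxy : o x y with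
      | true => exact arc x y hadj hxy hd
      | false =>
        refine arc y x hadj.symm ((ho y x hadj.symm).2 hxy) ?_
        rw [← neg_sub]; exact hd.neg_right)
  have := hcol.colorable
  rwa [ZMod.card] at this
end

section
/- Let G be a finite simple graph and let k and d be integers with k ≥ 2d ≥ 1. If G has an acyclic orientation ω such that τ(C,ω) ≤ k/d for every cycle C of G, then G has a (k,d)-coloring. -/
/-- An orientation is acyclic if the resulting digraph has no directed cycle. -/
def IsAcyclicOrientation {V : Type*} (G : SimpleGraph V) (o : V → V → Bool) : Prop :=
  IsOrientation G o ∧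
    ¬ ∃ (n : ℕ) (f : ZMod n → V), 0 < n ∧ Function.Injective f ∧
        ∀ i : ZMod n, G.Adj (f i) (f (i + 1)) ∧ o (f i) (f (i + 1)) = true

/-- The weight of a step from `a` to `b`: the constraint on a potential `p` attached to adjacent
vertices `a`, `b` is `p a ≤ p b + stepWeight o k d a b`. -/
def stepWeight {V : Type*} (o : V → V → Bool) (k d : ℕ) (a b : V) : ℤ :=
  if o a b = true then -(d : ℤ) else (k : ℤ) - d

/-- `x` is the weight of a simple path `g 0, …, g m` of `G` with `g 0 = v`. The values of `g`
beyond `m` are irrelevant. -/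
def IsPathWeight {V : Type*} (G : SimpleGraph V) (o : V → V → Bool) (k d : ℕ) (v : V)
    (x : ℤ) : Prop :=
  ∃ (m : ℕ) (g : ℕ → V), g 0 = v ∧ Set.InjOn g (Set.Iic m) ∧
    (∀ i < m, G.Adj (g i) (g (i + 1))) ∧
    x = ∑ i ∈ Finset.range m, stepWeight o k d (g i) (g (i + 1))

/-- The closed walk `g 0, …, g j, g 0` is a cycle of `G`, and its bound on `τ` makes its total
weight nonnegative. -/
lemma cycle_weight_nonneg {V : Type*} (G : SimpleGraph V) (k d : ℕ) (hd : 1 ≤ d)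
    (o : V → V → Bool)
    (h : ∀ (n : ℕ) (f : ZMod n → V), IsCycle G n f → TauLe o n f ((k : ℝ) / (d : ℝ)))
    (j : ℕ) (g : ℕ → V) (hinj : Set.InjOn g (Set.Iic j))
    (hadj : ∀ i < j, G.Adj (g i) (g (i + 1))) (hlast : G.Adj (g j) (g 0)) :
    0 ≤ ∑ i ∈ Finset.range j, stepWeight o k d (g i) (g (i + 1)) +
      stepWeight o k d (g j) (g 0) := by
  set f : ZMod (j + 1) → V := fun i => g i.val with hf
  have f_cast : ∀ i : ℕ, i ≤ j → f (i : ZMod (j + 1)) = g i := by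
    intro i hi
    simp only [hf]
    rw [ZMod.val_natCast_of_lt (by omega)]
  have f_succ : ∀ i : ℕ, i < j → f ((i : ZMod (j + 1)) + 1) = g (i + 1) := by
    intro i hi
    rw [← f_cast (i + 1) hi]
    push_cast
    rfl
  have f_last : f ((j : ZMod (j + 1)) + 1) = g 0 := by
    have hzero : ((j : ZMod (j + 1)) + 1) = 0 := by
      exact_mod_cast ZMod.natCast_self (j + 1)
    simp [hf, hzero]
  have hcyc : IsCycle G (j + 1) f := by
    refine ⟨by omega, ?_, ?_⟩
    · intro a b hab
      have ha := ZMod.val_lt a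
      have hb := ZMod.val_lt b
      exact ZMod.val_injective _
        (hinj (Set.mem_Iic.2 (by omega)) (Set.mem_Iic.2 (by omega)) hab)
    · intro i
      have hi := ZMod.val_lt i
      rw [← ZMod.natCast_zmod_val i, f_cast _ (by omega)]
      rcases Nat.lt_or_ge i.val j with hlt | hge
      · rw [f_succ _ hlt]
        exact hadj _ hlt
      · have heq : i.val = j := by omega
        rw [heq, f_last]
        exact hlast
  obtain ⟨-, -, -, hτ⟩ := h _ f hcyc
  -- The total weight of the cycle, step by step, is `k |C⁻| - d |C|`.
  have hsum : ∑ i ∈ Finset.range j, stepWeight o k d (g i) (g (i + 1)) +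
      stepWeight o k d (g j) (g 0) =
        (k : ℤ) * (((j + 1 : ℕ) : ℤ) - plusCount o (j + 1) f) - d * ((j + 1 : ℕ) : ℤ) := by
    have hstep : ∑ i ∈ Finset.range j, stepWeight o k d (g i) (g (i + 1)) +
        stepWeight o k d (g j) (g 0) = ∑ i ∈ Finset.range (j + 1),
          stepWeight o k d (f (i : ZMod (j + 1))) (f ((i : ZMod (j + 1)) + 1)) := by
      rw [Finset.sum_range_succ, f_cast j le_rfl, f_last]
      congr 1
      refine Finset.sum_congr rfl fun i hi => ?_
      have hi' := Finset.mem_range.1 hi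
      rw [f_cast i hi'.le, f_succ i hi']
    have hterm : ∀ a b : V, stepWeight o k d a b =
        ((k : ℤ) - d) - k * (if o a b = true then 1 else 0) := by
      intro a b
      unfold stepWeight
      split_ifs <;> ring
    rw [hstep]
    simp only [hterm]
    rw [Finset.sum_sub_distrib, ← Finset.mul_sum, Finset.sum_boole]
    simp only [Finset.sum_const, Finset.card_range, nsmul_eq_mul, plusCount]
    ring
  rw [hsum]
  have hd' : (0 : ℝ) < d := by exact_mod_cast hd
  rw [div_mul_eq_mul_div, le_div_iff₀ hd'] at hτ
  have hτ' : (((j + 1 : ℕ) : ℤ)) * d ≤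
      k * (((j + 1 : ℕ) : ℤ) - plusCount o (j + 1) f) := by
    exact_mod_cast hτ
  linarith

lemma isPathWeight_bddBelow {V : Type*} [Fintype V] (G : SimpleGraph V) (k d : ℕ) (hk : 2 * d ≤ k)
    (o : V → V → Bool) (v : V) (x : ℤ) (hx : IsPathWeight G o k d v x) :
    -((Fintype.card V : ℤ) * d) ≤ x := by
  obtain ⟨m, g, -, hinj, -, rfl⟩ := hx
  have hm : m ≤ Fintype.card V := by
    have hcard : (Finset.range m).card ≤ (Finset.univ : Finset V).card :=
      Finset.card_le_card_of_injOn g (fun _ _ => Finset.mem_coe.2 (Finset.mem_univ _))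
        (hinj.mono fun i hi => by
          have := Finset.mem_range.1 (Finset.mem_coe.1 hi)
          exact Set.mem_Iic.2 this.le)
    simpa using hcard
  have hlow : ∑ i ∈ Finset.range m, (-(d : ℤ)) ≤
      ∑ i ∈ Finset.range m, stepWeight o k d (g i) (g (i + 1)) := by
    refine Finset.sum_le_sum fun i _ => ?_
    unfold stepWeight
    split_ifs <;> omega
  simp only [Finset.sum_const, Finset.card_range, nsmul_eq_mul] at hlow
  have hmd : (m : ℤ) * d ≤ (Fintype.card V : ℤ) * d := by
    exact_mod_cast Nat.mul_le_mul_right d hm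
  linarith

/-- Minimum path weights satisfy all the difference constraints. -/
lemma exists_potential_s9 {V : Type*} [Fintype V] (G : SimpleGraph V) (k d : ℕ) (hd : 1 ≤ d)
    (hk : 2 * d ≤ k) (o : V → V → Bool)
    (h : ∀ (n : ℕ) (f : ZMod n → V), IsCycle G n f → TauLe o n f ((k : ℝ) / (d : ℝ))) :
    ∃ p : V → ℤ, ∀ a b, G.Adj a b → p a ≤ p b + stepWeight o k d a b := by
  have hmin : ∀ v, ∃ x, IsPathWeight G o k d v x ∧ ∀ y, IsPathWeight G o k d v y → x ≤ y := by
    intro v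
    refine Int.exists_least_of_bdd
      ⟨_, fun x hx => isPathWeight_bddBelow G k d hk o v x hx⟩ ⟨0, 0, fun _ => v, rfl, ?_, ?_, ?_⟩
    · intro i hi i' hi' _
      simp only [Set.mem_Iic] at hi hi'
      omega
    · intro i hi
      omega
    · simp
  choose p hp hple using hmin
  refine ⟨p, fun a b hab => ?_⟩
  obtain ⟨m, g, hg0, hinj, hadj, hw⟩ := hp b
  by_cases hmem : ∃ j ≤ m, g j = a
  · obtain ⟨j, hjm, hja⟩ := hmem
    have hcycle := cycle_weight_nonneg G k d hd o h j g
      (hinj.mono (Set.Iic_subset_Iic.2 hjm)) (fun i hi => hadj i (by omega))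
      (by rw [hja, hg0]; exact hab)
    have htail := hple a (∑ i ∈ Finset.range (m - j),
        stepWeight o k d (g (j + i)) (g (j + i + 1)))
      ⟨m - j, fun i => g (j + i), hja, by
        intro i hi i' hi' heq
        simp only [Set.mem_Iic] at hi hi'
        have := hinj (Set.mem_Iic.2 (by omega)) (Set.mem_Iic.2 (by omega)) heq
        omega, fun i hi => hadj (j + i) (by omega), rfl⟩
    have hsplit := Finset.sum_range_add
      (fun i => stepWeight o k d (g i) (g (i + 1))) j (m - j)
    rw [Nat.add_sub_cancel' hjm] at hsplit
    rw [hja, hg0] at hcycle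
    linarith
  · push Not at hmem
    refine hple a _ ⟨m + 1, fun i => Nat.casesOn i a g, rfl, ?_, ?_, ?_⟩
    · intro i hi i' hi' heq
      simp only [Set.mem_Iic] at hi hi'
      rcases i with _ | i <;> rcases i' with _ | i'
      · rfl
      · exact absurd heq.symm (hmem i' (by omega))
      · exact absurd heq (hmem i (by omega))
      · rw [hinj (Set.mem_Iic.2 (by omega)) (Set.mem_Iic.2 (by omega)) heq]
    · intro i hi
      rcases i with _ | i
      · simpa [hg0] using hab
      · exact hadj i (by omega)
    · rw [Finset.sum_range_succ', hw]
      simp [hg0]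

/-- If each edge changes `p` by an amount between `d` and `k - d` in absolute value, then `p`
modulo `k` is a `(k,d)`-coloring. -/
lemma isKDColoring_emod_of_potential {V : Type*} (G : SimpleGraph V) (k d : ℕ) (hd : 1 ≤ d)
    (hk : 2 * d ≤ k) (p : V → ℤ)
    (hp : ∀ u v, G.Adj u v → (d : ℤ) ≤ |p u - p v| ∧ |p u - p v| ≤ (k : ℤ) - d) :
    IsKDColoring G k d (fun v => p v % k) := by
  have hkpos : (0 : ℤ) < k := by omega
  refine ⟨fun v => ⟨Int.emod_nonneg _ hkpos.ne', Int.emod_lt_of_pos _ hkpos⟩, fun u v huv => ?_⟩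
  obtain ⟨hlow, hhigh⟩ := hp u v huv
  have hu0 := Int.emod_nonneg (p u) hkpos.ne'
  have hv0 := Int.emod_nonneg (p v) hkpos.ne'
  have hu1 := Int.emod_lt_of_pos (p u) hkpos
  have hv1 := Int.emod_lt_of_pos (p v) hkpos
  have hu := Int.emod_add_mul_ediv (p u) k
  have hv := Int.emod_add_mul_ediv (p v) k
  set t : ℤ := p u / k - p v / k with ht
  have hdiff : p u - p v = (p u % k - p v % k) + k * t := by
    rw [ht]
    linarith
  obtain ⟨hlo, hhi⟩ := abs_le.1 hhigh
  -- Both differences lie strictly between `-k` and `k`, so they differ by `-k`, `0` or `k`.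
  have ht1 : t < 2 := by
    by_contra hcon
    nlinarith
  have ht2 : -2 < t := by
    by_contra hcon
    nlinarith
  have hcases : t = -1 ∨ t = 0 ∨ t = 1 := by omega
  simp only
  generalize p u % (k : ℤ) = x at *
  generalize p v % (k : ℤ) = y at *
  rcases hcases with ht' | ht' | ht' <;> rw [ht'] at hdiff <;>
    rcases abs_cases (p u - p v) with ⟨he, _⟩ | ⟨he, _⟩ <;>
    rcases abs_cases (x - y) with ⟨he', _⟩ | ⟨he', _⟩ <;>
    constructor <;> omega

/-- **Goddyn–Tarsi–Zhang.** Let `k ≥ 2d ≥ 1` be integers. If `G` has an acyclic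
orientation `ω` with `τ(C, ω) ≤ k/d` for every cycle `C` of `G`, then `G` has a
`(k,d)`-coloring. -/
theorem kd_coloring_of_acyclic_orientation {V : Type*} [Fintype V]
    (G : SimpleGraph V) (k d : ℕ) (hd : 1 ≤ d) (hk : 2 * d ≤ k)
    (o : V → V → Bool) (ho : IsAcyclicOrientation G o)
    (h : ∀ (n : ℕ) (f : ZMod n → V), IsCycle G n f → TauLe o n f ((k : ℝ) / (d : ℝ))) :
    ∃ φ : V → ℤ, IsKDColoring G k d φ := by
  obtain ⟨p, hp⟩ := exists_potential_s9 G k d hd hk o h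
  refine ⟨_, isKDColoring_emod_of_potential G k d hd hk p fun u v huv => ?_⟩
  have huv' := hp u v huv
  have hvu' := hp v u huv.symm
  have hor := ho.1 u v huv
  unfold stepWeight at huv' hvu'
  rcases Bool.eq_false_or_eq_true (o u v) with hout | hout
  · have hback : o v u = false := hor.1 hout
    simp only [hout, hback, if_true, Bool.false_eq_true, if_false] at huv' hvu'
    rcases abs_cases (p u - p v) with ⟨he, _⟩ | ⟨he, _⟩ <;> constructor <;> omega
  · have hback : o v u = true := by simpa [hout] using hor
    simp only [hout, hback, if_true, Bool.false_eq_true, if_false] at huv' hvu'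
    rcases abs_cases (p u - p v) with ⟨he, _⟩ | ⟨he, _⟩ <;> constructor <;> omega
end
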